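/- Let Ω ⊂ ℝⁿ be a bounded open set, 0 < λ ≤ Λ, γ ≥ 0, and let F : S(n) × ℝⁿ × ℝ × Ω̄ × [0,T] → ℝ be continuous, uniformly elliptic with constants λ, Λ, satisfy the structure condition with constant γ and moduli ω_R, and satisfy |F(M,P,r,x,t) - F(M,P,r,y,s)| ≤ σ₁(|x-y|) + σ₂(|t-s|) for all arguments, where σ₁, σ₂ are moduli of continuity (nondecreasing, continuous, vanishing at 0). Let h ∈ (0,1] and let z_{0,h} ≡ 0 and, for each n ≥ 0, let z_{n+1,h} ∈ C(Ω̄) be a viscosity solution of F(D²z, Dz, z, x, (n+1)h) + z/h = z_{n,h}/h in Ω with z = 0 on ∂Ω. Then for every n ≥ 1, ‖z_{n+1,h} - z_{n,h}‖_{L^∞(Ω)} ≤ ‖z_{n,h} - z_{n-1,h}‖_{L^∞(Ω)} + h σ₂(h). -/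

import Mathlib

/-!
Subtracting the equations for two consecutive iterates leaves a difference of `h` in the time
argument of `F` and the difference of the right-hand sides `z m / h` and `z (m - 1) / h`. By
degenerate ellipticity the comparison principle applies, and the term `z / h` turns it into the
upper bound for `z (m + 1) - z m`; the lower bound follows by exchanging the two iterates.

For viscosity solutions `u`, `v` the comparison principle needs superjets of `u` and of `-v` at
nearby points whose slopes nearly cancel and whose Hessians have a sum `≤ 0`. No doubling of
variables is used: `u` and `-v` are replaced by their sup-convolutions, which are semiconvex, and a
jet of a sup-convolution is a jet of the original function at the point realising the supremum. A
small linear perturbation moves the maximum of the sum of the two sup-convolutions to a point where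
both are twice differentiable. This is Jensen's lemma: the slope of the perturbation is a Lipschitz
function of the maximum point, so the maximum points of all small perturbations fill a set of
positive measure, while by Alexandrov's theorem convex functions are twice differentiable almost
everywhere.

Alexandrov's theorem is proved through the proximal map `J = (1 + ∂f)⁻¹`, which is nonexpansive and
is `1` minus the gradient of the Moreau envelope. By Rademacher's theorem and Sard's lemma, almost
every `x` is of the form `J y` with `J` differentiable at `y` with invertible derivative `A`, and
there the second-order expansion of the envelope turns into one of `f` with Hessian `A⁻¹ - 1`.
-/

open scoped RealInnerProductSpace
open MeasureTheory Filter Topology Asymptotics Metric Set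

noncomputable section

abbrev Eucl (d : ℕ) := EuclideanSpace ℝ (Fin d)

open Classical in
noncomputable def eigs {d : ℕ} (M : Matrix (Fin d) (Fin d) ℝ) : Fin d → ℝ :=
  if h : M.IsHermitian then h.eigenvalues else 0

noncomputable def specNorm {d : ℕ} (M : Matrix (Fin d) (Fin d) ℝ) : ℝ := ⨆ i, |eigs M i|
noncomputable def posPartNorm {d : ℕ} (M : Matrix (Fin d) (Fin d) ℝ) : ℝ := ⨆ i, max (eigs M i) 0
noncomputable def negPartNorm {d : ℕ} (M : Matrix (Fin d) (Fin d) ℝ) : ℝ := ⨆ i, max (-(eigs M i)) 0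
noncomputable def posPartTrace {d : ℕ} (M : Matrix (Fin d) (Fin d) ℝ) : ℝ := ∑ i, max (eigs M i) 0
noncomputable def negPartTrace {d : ℕ} (M : Matrix (Fin d) (Fin d) ℝ) : ℝ := ∑ i, max (-(eigs M i)) 0

noncomputable def pucciPlus {d : ℕ} (lam Lam : ℝ) (M : Matrix (Fin d) (Fin d) ℝ) : ℝ :=
  -lam * posPartTrace M + Lam * negPartTrace M

noncomputable def pucciMinus {d : ℕ} (lam Lam : ℝ) (M : Matrix (Fin d) (Fin d) ℝ) : ℝ :=
  -Lam * posPartTrace M + lam * negPartTrace M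

noncomputable def gradAt {d : ℕ} (φ : Eucl d → ℝ) (x : Eucl d) : Eucl d :=
  (EuclideanSpace.equiv (Fin d) ℝ).symm (fun i => fderiv ℝ φ x (EuclideanSpace.single i 1))

noncomputable def hessAt {d : ℕ} (φ : Eucl d → ℝ) (x : Eucl d) : Matrix (Fin d) (Fin d) ℝ :=
  Matrix.of fun i j =>
    fderiv ℝ (fun y => fderiv ℝ φ y (EuclideanSpace.single j 1)) x (EuclideanSpace.single i 1)

noncomputable def quadForm {d : ℕ} (M : Matrix (Fin d) (Fin d) ℝ) (v : Eucl d) : ℝ :=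
  ∑ i, ∑ j, M i j * v i * v j

def ViscSubsol {d : ℕ} (Ω : Set (Eucl d))
    (G : Matrix (Fin d) (Fin d) ℝ → Eucl d → ℝ → Eucl d → ℝ)
    (g : Eucl d → ℝ) (u : Eucl d → ℝ) : Prop :=
  ∀ x₀ ∈ Ω, ∀ φ : Eucl d → ℝ, ContDiffAt ℝ 2 φ x₀ →
    IsLocalMax (fun x => u x - φ x) x₀ →
    G (hessAt φ x₀) (gradAt φ x₀) (u x₀) x₀ ≤ g x₀

def ViscSupersol {d : ℕ} (Ω : Set (Eucl d))
    (G : Matrix (Fin d) (Fin d) ℝ → Eucl d → ℝ → Eucl d → ℝ)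
    (g : Eucl d → ℝ) (u : Eucl d → ℝ) : Prop :=
  ∀ x₀ ∈ Ω, ∀ φ : Eucl d → ℝ, ContDiffAt ℝ 2 φ x₀ →
    IsLocalMin (fun x => u x - φ x) x₀ →
    g x₀ ≤ G (hessAt φ x₀) (gradAt φ x₀) (u x₀) x₀

def ViscSol {d : ℕ} (Ω : Set (Eucl d))
    (G : Matrix (Fin d) (Fin d) ℝ → Eucl d → ℝ → Eucl d → ℝ)
    (g : Eucl d → ℝ) (u : Eucl d → ℝ) : Prop :=
  ViscSubsol Ω G g u ∧ ViscSupersol Ω G g u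

def UniformlyElliptic {d : ℕ} (lam Lam : ℝ) (X : Set (Eucl d)) (Tset : Set ℝ)
    (F : Matrix (Fin d) (Fin d) ℝ → Eucl d → ℝ → Eucl d → ℝ → ℝ) : Prop :=
  ∀ M N : Matrix (Fin d) (Fin d) ℝ, M.IsSymm → N.PosSemidef →
    ∀ (P : Eucl d) (v : ℝ), ∀ x ∈ X, ∀ t ∈ Tset,
      -Lam * specNorm N ≤ F (M + N) P v x t - F M P v x t ∧
      F (M + N) P v x t - F M P v x t ≤ -lam * specNorm N

def IsModulus (σ : ℝ → ℝ) : Prop := Monotone σ ∧ Continuous σ ∧ σ 0 = 0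

def StructureCondition {d : ℕ} (lam Lam gam : ℝ) (ω : ℝ → ℝ → ℝ)
    (X : Set (Eucl d)) (Tset : Set ℝ)
    (F : Matrix (Fin d) (Fin d) ℝ → Eucl d → ℝ → Eucl d → ℝ → ℝ) : Prop :=
  (∀ R > 0, IsModulus (ω R)) ∧
  ∀ R > 0, ∀ M N : Matrix (Fin d) (Fin d) ℝ, M.IsSymm → N.IsSymm →
    ∀ (P Q : Eucl d) (r s : ℝ), |r| ≤ R → |s| ≤ R → ∀ x ∈ X, ∀ t ∈ Tset,
      pucciMinus lam Lam (M - N) - gam * ‖P - Q‖ - ω R (max (s - r) 0)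
          ≤ F M P r x t - F N Q s x t ∧
      F M P r x t - F N Q s x t
          ≤ pucciPlus lam Lam (M - N) + gam * ‖P - Q‖ + ω R (max (r - s) 0)

noncomputable def supConv {d : ℕ} (Ω : Set (Eucl d)) (u : Eucl d → ℝ) (ε : ℝ) (x : Eucl d) : ℝ :=
  sSup ((fun y => u y - ‖x - y‖ ^ 2 / (2 * ε)) '' closure Ω)

noncomputable def infConv {d : ℕ} (Ω : Set (Eucl d)) (u : Eucl d → ℝ) (ε : ℝ) (x : Eucl d) : ℝ :=
  sInf ((fun y => u y + ‖x - y‖ ^ 2 / (2 * ε)) '' closure Ω)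

noncomputable def supNorm {d : ℕ} (Ω : Set (Eucl d)) (u : Eucl d → ℝ) : ℝ :=
  sSup ((fun y => |u y|) '' closure Ω)

def RotheStep {d : ℕ} (Ω : Set (Eucl d))
    (F : Matrix (Fin d) (Fin d) ℝ → Eucl d → ℝ → Eucl d → ℝ → ℝ)
    (h : ℝ) (m : ℕ) (zprev znext : Eucl d → ℝ) : Prop :=
  ContinuousOn znext (closure Ω) ∧
  ViscSol Ω (fun M P r x => F M P r x ((m + 1) * h) + r / h) (fun x => zprev x / h) znext ∧
  ∀ x ∈ frontier Ω, znext x = 0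

noncomputable def rotheInterp {d : ℕ} (z : ℕ → Eucl d → ℝ) (h : ℝ) (x : Eucl d) (t : ℝ) : ℝ :=
  ((⌊t / h⌋₊ + 1 : ℝ) * h - t) / h * z ⌊t / h⌋₊ x + (t - (⌊t / h⌋₊ : ℝ) * h) / h * z (⌊t / h⌋₊ + 1) x

def HasSmoothBoundary {d : ℕ} (Ω : Set (Eucl d)) : Prop :=
  ∃ f : Eucl d → ℝ, ContDiff ℝ (⊤ : ℕ∞) f ∧ Ω = {x | f x < 0} ∧ ∀ x ∈ frontier Ω, fderiv ℝ f x ≠ 0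

def C21 {d : ℕ} (φ : Eucl d → ℝ → ℝ) : Prop :=
  (∀ t, ContDiff ℝ 2 fun x => φ x t) ∧
  (∀ x, ContDiff ℝ 1 fun t => φ x t) ∧
  Continuous (fun p : Eucl d × ℝ => φ p.1 p.2) ∧
  Continuous (fun p : Eucl d × ℝ => hessAt (fun x => φ x p.2) p.1) ∧
  Continuous (fun p : Eucl d × ℝ => gradAt (fun x => φ x p.2) p.1) ∧
  Continuous (fun p : Eucl d × ℝ => deriv (φ p.1) p.2)

def ParabolicViscSubsol {d : ℕ} (Ω : Set (Eucl d)) (T : ℝ)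
    (F : Matrix (Fin d) (Fin d) ℝ → Eucl d → ℝ → Eucl d → ℝ → ℝ)
    (u : Eucl d × ℝ → ℝ) : Prop :=
  ∀ φ : Eucl d → ℝ → ℝ, C21 φ → ∀ ε > (0:ℝ),
    (∀ x ∈ closure Ω, ∀ t ∈ Icc (0:ℝ) T,
      ε ≤ deriv (φ x) t +
        F (hessAt (fun y => φ y t) x) (gradAt (fun y => φ y t) x) (φ x t) x t) →
    ¬ ∃ p ∈ Ω ×ˢ Ioc (0:ℝ) T,
        IsLocalMaxOn (fun q : Eucl d × ℝ => u q - φ q.1 q.2) (Ω ×ˢ Ioc (0:ℝ) T) p ∧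
        u p - φ p.1 p.2 = 0

def ParabolicViscSupersol {d : ℕ} (Ω : Set (Eucl d)) (T : ℝ)
    (F : Matrix (Fin d) (Fin d) ℝ → Eucl d → ℝ → Eucl d → ℝ → ℝ)
    (u : Eucl d × ℝ → ℝ) : Prop :=
  ∀ φ : Eucl d → ℝ → ℝ, C21 φ → ∀ ε > (0:ℝ),
    (∀ x ∈ closure Ω, ∀ t ∈ Icc (0:ℝ) T,
      deriv (φ x) t +
        F (hessAt (fun y => φ y t) x) (gradAt (fun y => φ y t) x) (φ x t) x t ≤ -ε) →
    ¬ ∃ p ∈ Ω ×ˢ Ioc (0:ℝ) T,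
        IsLocalMinOn (fun q : Eucl d × ℝ => u q - φ q.1 q.2) (Ω ×ˢ Ioc (0:ℝ) T) p ∧
        u p - φ p.1 p.2 = 0

/-! ### Subgradients and the proximal map -/

section Subgradient

variable {E : Type*} [NormedAddCommGroup E] [InnerProductSpace ℝ E]

/-- `q` is a subgradient of `f` at `x`, that is `q ∈ ∂f(x)`: an affine function of slope `q` touches
the graph of `f` from below above `x`. -/
def HasSubgradientAt (f : E → ℝ) (q x : E) : Prop :=
  ∀ w, f x + ⟪q, w - x⟫ ≤ f w

lemma exists_hasSubgradientAt [CompleteSpace E] {f : E → ℝ} (hconv : ConvexOn ℝ univ f)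
    (hcont : Continuous f) (x : E) : ∃ q, HasSubgradientAt f q x := by
  have hopen : IsOpen {p : E × ℝ | p.1 ∈ univ ∧ f p.1 < p.2} :=
    isOpen_univ.preimage continuous_fst |>.inter
      (isOpen_lt (hcont.comp continuous_fst) continuous_snd)
  obtain ⟨L, hL⟩ := geometric_hahn_banach_point_open hconv.convex_strict_epigraph hopen
    (x := (x, f x)) (by simp)
  obtain ⟨ℓ, c, hsplit⟩ : ∃ (ℓ : StrongDual ℝ E) (c : ℝ), ∀ w s, L (w, s) = ℓ w + s * c := by
    refine ⟨L.comp (.inl ℝ E ℝ), L (0, 1), fun w s => ?_⟩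
    rw [← smul_eq_mul s, ← map_smul, ContinuousLinearMap.comp_apply, ← map_add]
    simp
  have hsep (w : E) {s : ℝ} (hs : f w < s) : ℓ x + f x * c < ℓ w + s * c := by
    simpa only [hsplit] using hL (w, s) ⟨mem_univ w, hs⟩
  have hpos : 0 < c := by linarith [hsep x (lt_add_one (f x))]
  have hle (w : E) : ℓ x + f x * c ≤ ℓ w + f w * c := by
    refine le_of_forall_pos_lt_add fun δ hδ => ?_
    have := hsep w (lt_add_of_pos_right (f w) (div_pos hδ hpos))
    rwa [add_mul, div_mul_cancel₀ _ hpos.ne', ← add_assoc] at this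
  refine ⟨(InnerProductSpace.toDual ℝ E).symm (-c⁻¹ • ℓ), fun w => ?_⟩
  have hslope : (-c⁻¹ • ℓ) (w - x) = (ℓ x - ℓ w) / c := by
    rw [smul_apply, map_sub, smul_eq_mul]
    ring
  rw [InnerProductSpace.toDual_symm_apply, hslope, ← le_sub_iff_add_le', div_le_iff₀ hpos]
  linarith [hle w]

/-- Along each ray from `x` the quadratic error is negligible against the other terms. -/
lemma hasSubgradientAt_of_le_add_sq {f : E → ℝ} (hconv : ConvexOn ℝ univ f) {q x : E} {C : ℝ}
    (hle : ∀ w, f x + ⟪q, w - x⟫ ≤ f w + C * ‖w - x‖ ^ 2) : HasSubgradientAt f q x := by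
  intro w
  have hray : ∀ t ∈ Ioc (0 : ℝ) 1, f x + ⟪q, w - x⟫ ≤ f w + t * (C * ‖w - x‖ ^ 2) := by
    rintro t ⟨ht0, ht1⟩
    have hpt := hle ((1 - t) • x + t • w)
    have hcomb := hconv.2 (mem_univ x) (mem_univ w) (sub_nonneg.2 ht1) ht0.le (by ring)
    rw [show (1 - t) • x + t • w - x = t • (w - x) by module, inner_smul_right, norm_smul, mul_pow,
      Real.norm_eq_abs, sq_abs] at hpt
    rw [smul_eq_mul, smul_eq_mul] at hcomb
    refine le_of_mul_le_mul_left ?_ ht0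
    linear_combination hpt + hcomb
  have hlim : Tendsto (fun t : ℝ => f w + t * (C * ‖w - x‖ ^ 2)) (𝓝[>] 0)
      (𝓝 (f w + 0 * (C * ‖w - x‖ ^ 2))) :=
    (Continuous.tendsto (by fun_prop) 0).mono_left nhdsWithin_le_nhds
  rw [zero_mul, add_zero] at hlim
  refine ge_of_tendsto hlim ?_
  filter_upwards [Ioc_mem_nhdsGT one_pos] with t ht using hray t ht

/-- By convexity, reflection in `x` turns the bound from above into one from below by the opposite
paraboloid. -/
lemma hasSubgradientAt_of_le_paraboloid {f : E → ℝ} (hconv : ConvexOn ℝ univ f) {q x : E} {C : ℝ}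
    (hle : ∀ w, f w ≤ f x + ⟪q, w - x⟫ + C * ‖w - x‖ ^ 2) : HasSubgradientAt f q x := by
  refine hasSubgradientAt_of_le_add_sq hconv (C := C) fun w => ?_
  have hmid := hconv.2 (mem_univ w) (mem_univ (x - (w - x)))
    (one_half_pos (α := ℝ)).le one_half_pos.le (add_halves 1)
  have hrefl := hle (x - (w - x))
  rw [show x - (w - x) - x = -(w - x) by module, inner_neg_right, norm_neg] at hrefl
  rw [show (1 / 2 : ℝ) • w + (1 / 2 : ℝ) • (x - (w - x)) = x by module, smul_eq_mul,
    smul_eq_mul] at hmid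
  linarith

/-- `J` is the proximal map of `f`, that is `J = (1 + ∂f)⁻¹`; equivalently `J y` minimises
`f + ‖· - y‖² / 2` when `f` is convex. -/
def IsProxMap (f : E → ℝ) (J : E → E) : Prop :=
  ∀ y, HasSubgradientAt f (y - J y) (J y)

lemma tendsto_add_norm_sub_sq_cocompact [ProperSpace E] {f : E → ℝ} {q x : E}
    (hq : HasSubgradientAt f q x) (y : E) :
    Tendsto (fun w => f w + ‖w - y‖ ^ 2 / 2) (cocompact E) atTop := by
  have hdist : Tendsto (fun w => ‖w - (y - q)‖ ^ 2) (cocompact E) atTop := by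
    simpa only [Function.comp_def, dist_eq_norm] using
      (tendsto_pow_atTop two_ne_zero).comp (tendsto_dist_right_cocompact_atTop (y - q))
  refine tendsto_atTop_mono (fun w => ?_) (tendsto_atTop_add_const_left _
    (f x + ⟪q, y - x⟫ - ‖q‖ ^ 2 / 2) (hdist.atTop_div_const two_pos))
  have hsq : ‖w - (y - q)‖ ^ 2 = ‖w - y‖ ^ 2 + 2 * ⟪w - y, q⟫ + ‖q‖ ^ 2 := by
    rw [← norm_add_sq_real, show w - (y - q) = w - y + q by module]
  have hsplit : ⟪q, w - x⟫ = ⟪w - y, q⟫ + ⟪q, y - x⟫ := by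
    rw [real_inner_comm q (w - y), ← inner_add_right, sub_add_sub_cancel]
  linarith [hq w]

lemma exists_isProxMap [FiniteDimensional ℝ E] {f : E → ℝ} (hconv : ConvexOn ℝ univ f) :
    ∃ J, IsProxMap f J := by
  have hcont : Continuous f := hconv.locallyLipschitz.continuous
  have := FiniteDimensional.proper_real E
  have hmin : ∀ y, ∃ x, HasSubgradientAt f (y - x) x := by
    intro y
    obtain ⟨q, hq⟩ := exists_hasSubgradientAt hconv hcont 0
    obtain ⟨x, hx⟩ := Continuous.exists_forall_le (f := fun w => f w + ‖w - y‖ ^ 2 / 2)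
      (by fun_prop) (tendsto_add_norm_sub_sq_cocompact hq y)
    refine ⟨x, hasSubgradientAt_of_le_add_sq hconv (C := 1 / 2) fun w => ?_⟩
    have hsq : ‖w - y‖ ^ 2 = ‖w - x‖ ^ 2 - 2 * ⟪y - x, w - x⟫ + ‖x - y‖ ^ 2 := by
      rw [real_inner_comm, norm_sub_rev x y, ← norm_sub_sq_real, sub_sub_sub_cancel_right]
    linarith [hx w]
  choose J hJ using hmin
  exact ⟨J, hJ⟩

namespace IsProxMap

variable {f : E → ℝ} {J : E → E}

lemma norm_sub_sq_le_inner (hJ : IsProxMap f J) (y y' : E) :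
    ‖J y - J y'‖ ^ 2 ≤ ⟪J y - J y', y - y'⟫ := by
  have hy := hJ y (J y')
  have hy' := hJ y' (J y)
  have hneg : ⟪y - J y, J y' - J y⟫ = -⟪J y - J y', y - J y⟫ := by
    rw [← inner_neg_left, real_inner_comm, neg_sub]
  have hsplit : ⟪J y - J y', y - y'⟫
      = ⟪J y - J y', y - J y⟫ - ⟪J y - J y', y' - J y'⟫ + ‖J y - J y'‖ ^ 2 := by
    rw [← real_inner_self_eq_norm_sq, ← inner_sub_right, ← inner_add_right]
    congr 1
    module
  rw [hneg] at hy
  rw [real_inner_comm] at hy'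
  linarith

lemma lipschitzWith (hJ : IsProxMap f J) : LipschitzWith 1 J := by
  refine LipschitzWith.of_dist_le_mul fun y y' => ?_
  rw [dist_eq_norm, dist_eq_norm, NNReal.coe_one, one_mul]
  rcases (norm_nonneg (J y - J y')).eq_or_lt with hzero | hpos
  · simp [← hzero]
  · refine le_of_mul_le_mul_left ?_ hpos
    rw [← sq]
    exact (hJ.norm_sub_sq_le_inner y y').trans (real_inner_le_norm _ _)

lemma apply_add_subgradient (hJ : IsProxMap f J) {x q : E} (hq : HasSubgradientAt f q x) :
    J (x + q) = x := by
  have hprox := hJ (x + q) x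
  have hsub := hq (J (x + q))
  have hsplit : ⟪x + q - J (x + q), x - J (x + q)⟫
      = ‖x - J (x + q)‖ ^ 2 - ⟪q, J (x + q) - x⟫ := by
    rw [← real_inner_self_eq_norm_sq, sub_eq_add_neg _ ⟪q, _⟫, ← inner_neg_right, neg_sub,
      ← inner_add_left]
    congr 1
    module
  have hzero : ‖x - J (x + q)‖ ^ 2 ≤ 0 := by linarith
  exact (sub_eq_zero.1 (norm_eq_zero.1 (pow_eq_zero_iff two_ne_zero |>.1
    (hzero.antisymm (sq_nonneg _))))).symm

end IsProxMap

/-- The Moreau envelope of `f`, the infimal convolution of `f` with `‖·‖² / 2`, expressed through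
the proximal map `J` of `f`. -/
def moreauEnvelope (f : E → ℝ) (J : E → E) (y : E) : ℝ :=
  f (J y) + ‖y - J y‖ ^ 2 / 2

namespace IsProxMap

variable {f : E → ℝ} {J : E → E}

lemma moreauEnvelope_add_le (hJ : IsProxMap f J) (y m : E) :
    moreauEnvelope f J (y + m) ≤ moreauEnvelope f J y + ⟪y - J y, m⟫ + ‖m‖ ^ 2 / 2 := by
  have hprox := hJ (y + m) (J y)
  have hexpand : ‖y + m - J y‖ ^ 2 = ‖y - J y‖ ^ 2 + 2 * ⟪y - J y, m⟫ + ‖m‖ ^ 2 := by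
    rw [← norm_add_sq_real, add_sub_right_comm]
  have hpolar : ‖y + m - J y‖ ^ 2 = ‖y + m - J (y + m)‖ ^ 2
      - 2 * ⟪y + m - J (y + m), J y - J (y + m)⟫ + ‖J y - J (y + m)‖ ^ 2 := by
    rw [← norm_sub_sq_real, sub_sub_sub_cancel_right]
  unfold moreauEnvelope
  linarith [sq_nonneg ‖J y - J (y + m)‖]

lemma le_moreauEnvelope_add (hJ : IsProxMap f J) (y m : E) :
    moreauEnvelope f J y + ⟪y - J y, m⟫ - ‖m‖ ^ 2 / 2 ≤ moreauEnvelope f J (y + m) := by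
  have hback := hJ.moreauEnvelope_add_le (y + m) (-m)
  rw [add_neg_cancel_right, norm_neg, inner_neg_right] at hback
  have hsplit : ⟪y + m - J (y + m), m⟫ = ⟪y - J y, m⟫ + ‖m‖ ^ 2 - ⟪J (y + m) - J y, m⟫ := by
    rw [← real_inner_self_eq_norm_sq, ← inner_add_left, ← inner_sub_left]
    congr 1
    module
  have hinner : ⟪J (y + m) - J y, m⟫ ≤ ‖m‖ * ‖m‖ := by
    refine (real_inner_le_norm _ _).trans (mul_le_mul_of_nonneg_right ?_ (norm_nonneg m))
    simpa [dist_eq_norm] using hJ.lipschitzWith.dist_le_mul (y + m) y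
  linarith

lemma hasFDerivAt_moreauEnvelope (hJ : IsProxMap f J) (y : E) :
    HasFDerivAt (moreauEnvelope f J) (innerSL ℝ (y - J y)) y := by
  rw [hasFDerivAt_iff_isLittleO_nhds_zero]
  have hbound : (fun m => moreauEnvelope f J (y + m) - moreauEnvelope f J y - innerSL ℝ (y - J y) m)
      =O[𝓝 0] fun m : E => ‖m‖ ^ 2 := by
    refine IsBigO.of_bound 1 (Eventually.of_forall fun m => ?_)
    rw [innerSL_apply_apply, Real.norm_eq_abs, norm_pow, norm_norm, one_mul, abs_le]
    constructor <;>
      linarith [hJ.moreauEnvelope_add_le y m, hJ.le_moreauEnvelope_add y m, sq_nonneg ‖m‖]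
  simpa using hbound.trans_isLittleO (isLittleO_norm_pow_id (E' := E) one_lt_two)

end IsProxMap

end Subgradient

/-! ### Second-order expansions -/

section TaylorTwo

variable {E : Type*} [NormedAddCommGroup E] [InnerProductSpace ℝ E]

/-- `f` has a second-order expansion at `x` with gradient `p` and Hessian `B`. This is a condition
at the single point `x`: it does not require `f` to be differentiable near `x`. -/
structure HasTaylorTwoAt (f : E → ℝ) (p : E) (B : E →L[ℝ] E) (x : E) : Prop where
  isSymmetric : (B : E →ₗ[ℝ] E).IsSymmetric
  isLittleO : (fun k => f (x + k) - f x - ⟪p, k⟫ - ⟪B k, k⟫ / 2) =o[𝓝 0] fun k => ‖k‖ ^ 2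

lemma hasFDerivAt_inner_apply_self_half {A : E →L[ℝ] E} (hA : (A : E →ₗ[ℝ] E).IsSymmetric) (m : E) :
    HasFDerivAt (fun m => ⟪A m, m⟫ / 2) (innerSL ℝ (A m)) m := by
  have hinner := ((A.hasFDerivAt (x := m)).inner ℝ (hasFDerivAt_id m)).mul_const (1 / 2 : ℝ)
  simp only [mul_one_div] at hinner
  refine hinner.congr_fderiv ?_
  ext k
  have hsymm : ⟪A k, m⟫ = ⟪A m, k⟫ := by rw [real_inner_comm]; exact (hA m k).symm
  simp [fderivInnerCLM_apply, hsymm, ← two_mul]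

lemma inner_isLittleO_norm_sq {α : Type*} {l : Filter α} {a b c : α → E} (ha : a =o[l] c)
    (hb : b =O[l] c) : (fun k => ⟪a k, b k⟫) =o[l] fun k => ‖c k‖ ^ 2 := by
  have hmul := ha.norm_norm.mul_isBigO hb.norm_norm
  simp only [← pow_two] at hmul
  refine IsBigO.trans_isLittleO (IsBigO.of_bound 1 (Eventually.of_forall fun k => ?_)) hmul
  simpa using abs_real_inner_le_norm (a k) (b k)

lemma isSymmetric_of_hasFDerivAt_gradient {f : E → ℝ} {g : E → E} {x : E} {A : E →L[ℝ] E}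
    (hf : ∀ᶠ y in 𝓝 x, HasFDerivAt f (innerSL ℝ (g y)) y) (hg : HasFDerivAt g A x) :
    (A : E →ₗ[ℝ] E).IsSymmetric := by
  intro v w
  exact (second_derivative_symmetric_of_eventually (𝕜 := ℝ) hf
    ((innerSL ℝ (E := E)).hasFDerivAt.comp x hg) v w).trans (real_inner_comm v (A w))

lemma hasTaylorTwoAt_of_hasFDerivAt_gradient {f : E → ℝ} {g : E → E} {x : E} {A : E →L[ℝ] E}
    (hf : ∀ᶠ y in 𝓝 x, HasFDerivAt f (innerSL ℝ (g y)) y) (hg : HasFDerivAt g A x) :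
    HasTaylorTwoAt f (g x) A x := by
  have hA := isSymmetric_of_hasFDerivAt_gradient hf hg
  refine ⟨hA, isLittleO_iff.2 fun c hc => ?_⟩
  have hf0 : ∀ᶠ m in 𝓝 0, HasFDerivAt f (innerSL ℝ (g (x + m))) (x + m) := by
    rw [← map_add_left_nhds_zero x] at hf
    exact hf
  obtain ⟨r, hr, hball⟩ := Metric.eventually_nhds_iff_ball.1
    (hf0.and (isLittleO_iff.1 (hasFDerivAt_iff_isLittleO_nhds_zero.1 hg) hc))
  filter_upwards [ball_mem_nhds (0 : E) hr] with m hm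
  set R : E → ℝ := fun m => f (x + m) - ⟪g x, m⟫ - ⟪A m, m⟫ / 2 with hR
  have hclosed {m' : E} (hm' : m' ∈ closedBall (0 : E) ‖m‖) : m' ∈ ball (0 : E) r := by
    rw [mem_ball_zero_iff] at hm ⊢
    exact (mem_closedBall_zero_iff.1 hm').trans_lt hm
  have hderiv : ∀ m' ∈ closedBall (0 : E) ‖m‖,
      HasFDerivAt R (innerSL ℝ (g (x + m') - g x - A m')) m' := by
    intro m' hm'
    have hshift : HasFDerivAt (fun m => f (x + m)) (innerSL ℝ (g (x + m'))) m' :=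
      (hasFDerivAt_comp_add_left x).2 (hball m' (hclosed hm')).1
    rw [map_sub, map_sub]
    exact (hshift.sub (innerSL ℝ (g x)).hasFDerivAt).sub (hasFDerivAt_inner_apply_self_half hA m')
  have hbound : ∀ m' ∈ closedBall (0 : E) ‖m‖, ‖innerSL ℝ (g (x + m') - g x - A m')‖ ≤ c * ‖m‖ := by
    intro m' hm'
    rw [innerSL_apply_norm]
    exact (hball m' (hclosed hm')).2.trans
      (mul_le_mul_of_nonneg_left (mem_closedBall_zero_iff.1 hm') hc.le)
  have hmean := (convex_closedBall (0 : E) ‖m‖).norm_image_sub_le_of_norm_hasFDerivWithin_le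
    (fun m' hm' => (hderiv m' hm').hasFDerivWithinAt) hbound
    (mem_closedBall_self (norm_nonneg _)) (mem_closedBall_zero_iff.2 le_rfl)
  calc ‖f (x + m) - f x - ⟪g x, m⟫ - ⟪A m, m⟫ / 2‖ = ‖R m - R 0‖ := by
        simp only [hR, add_zero, map_zero, inner_zero_right, zero_div, sub_zero]
        ring_nf
    _ ≤ c * ‖m‖ * ‖m - 0‖ := hmean
    _ = c * ‖‖m‖ ^ 2‖ := by rw [sub_zero, norm_pow, norm_norm]; ring

lemma hasTaylorTwoAt_const_mul_norm_sq (c : ℝ) (x : E) :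
    HasTaylorTwoAt (fun w => c * ‖w‖ ^ 2) ((2 * c) • x)
      ((2 * c) • ContinuousLinearMap.id ℝ E) x := by
  refine ⟨fun v w => by simp [inner_smul_left, inner_smul_right],
    (isLittleO_zero _ _).congr_left fun k => ?_⟩
  simp only [norm_add_sq_real, smul_apply, ContinuousLinearMap.id_apply, inner_smul_left,
    real_inner_self_eq_norm_sq, conj_trivial]
  ring

namespace HasTaylorTwoAt

variable {f f' : E → ℝ} {p p' x : E} {B B' : E →L[ℝ] E}

lemma add (hf : HasTaylorTwoAt f p B x) (hf' : HasTaylorTwoAt f' p' B' x) :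
    HasTaylorTwoAt (fun w => f w + f' w) (p + p') (B + B') x := by
  refine ⟨hf.isSymmetric.add hf'.isSymmetric,
    (hf.isLittleO.add hf'.isLittleO).congr_left fun k => ?_⟩
  simp only [inner_add_left, add_apply]
  ring

lemma hasFDerivAt (hf : HasTaylorTwoAt f p B x) : HasFDerivAt f (innerSL ℝ p) x := by
  rw [hasFDerivAt_iff_isLittleO_nhds_zero]
  have hquad : (fun k => ⟪B k, k⟫ / 2) =O[𝓝 0] fun k : E => ‖k‖ ^ 2 := by
    refine IsBigO.of_bound ‖B‖ (Eventually.of_forall fun k => ?_)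
    rw [norm_pow, norm_norm, Real.norm_eq_abs, abs_div, abs_two]
    have := (abs_real_inner_le_norm (B k) k).trans
      (mul_le_mul_of_nonneg_right (B.le_opNorm k) (norm_nonneg k))
    linarith [abs_nonneg ⟪B k, k⟫]
  have hsum := (hf.isLittleO.isBigO.add hquad).trans_isLittleO
    (isLittleO_norm_pow_id (E' := E) one_lt_two)
  exact hsum.congr_left fun k => by simp

lemma gradient_eq_of_isLocalMax (hf : HasTaylorTwoAt f p B x) {r : E}
    (hmax : IsLocalMax (fun w => f w - ⟪r, w⟫) x) : p = r := by
  have hzero := hmax.hasFDerivAt_eq_zero (hf.hasFDerivAt.sub (innerSL ℝ r).hasFDerivAt)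
  rw [← map_sub] at hzero
  rw [← sub_eq_zero, ← inner_self_eq_zero (𝕜 := ℝ)]
  exact DFunLike.congr_fun hzero (p - r)

lemma inner_hessian_nonpos_of_isLocalMax (hf : HasTaylorTwoAt f p B x) {r : E}
    (hmax : IsLocalMax (fun w => f w - ⟪r, w⟫) x) (k : E) : ⟪B k, k⟫ ≤ 0 := by
  obtain rfl := hf.gradient_eq_of_isLocalMax hmax
  have hray : Tendsto (fun t : ℝ => t • k) (𝓝[>] 0) (𝓝 0) :=
    ((continuous_id.smul continuous_const).tendsto' _ _ (zero_smul ℝ k)).mono_left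
      nhdsWithin_le_nhds
  have hmax0 : ∀ᶠ m in 𝓝 (0 : E), f (x + m) - ⟪p, x + m⟫ ≤ f x - ⟪p, x⟫ := by
    have := hmax
    rw [IsLocalMax, IsMaxFilter, ← map_add_left_nhds_zero x] at this
    exact this
  have hsmall {c : ℝ} (hc : 0 < c) : ⟪B k, k⟫ ≤ c * (2 * ‖k‖ ^ 2) := by
    obtain ⟨t, ⟨hle, hrem⟩, ht⟩ := ((hray.eventually
      (hmax0.and (isLittleO_iff.1 hf.isLittleO hc))).and self_mem_nhdsWithin).exists
    rw [norm_pow, norm_norm, norm_smul, mul_pow, Real.norm_eq_abs t, sq_abs] at hrem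
    simp only [map_smul, inner_add_right, inner_smul_left, inner_smul_right,
      conj_trivial] at hle hrem
    have ht2 : 0 < t ^ 2 := pow_pos ht 2
    refine le_of_mul_le_mul_left ?_ ht2
    linarith [neg_le_of_abs_le hrem]
  have hlim : Tendsto (fun c => c * (2 * ‖k‖ ^ 2)) (𝓝[>] 0) (𝓝 0) :=
    ((continuous_mul_const _).tendsto' _ _ (zero_mul _)).mono_left nhdsWithin_le_nhds
  exact ge_of_tendsto hlim (eventually_mem_nhdsWithin.mono fun c hc => hsmall hc)

end HasTaylorTwoAt

end TaylorTwo

/-! ### Alexandrov's theorem -/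

section Alexandrov

variable {E : Type*} [NormedAddCommGroup E] [InnerProductSpace ℝ E] {f : E → ℝ} {J : E → E}

namespace IsProxMap

lemma hasTaylorTwoAt_moreauEnvelope (hJ : IsProxMap f J) {A : E →L[ℝ] E} {y : E}
    (hA : HasFDerivAt J A y) :
    HasTaylorTwoAt (moreauEnvelope f J) (y - J y) (ContinuousLinearMap.id ℝ E - A) y :=
  hasTaylorTwoAt_of_hasFDerivAt_gradient (Eventually.of_forall hJ.hasFDerivAt_moreauEnvelope)
    ((hasFDerivAt_id y).sub hA)

lemma norm_sub_sq_le_of_mem_ray (hJ : IsProxMap f J) (y m : E) {t : ℝ} (ht0 : 0 ≤ t) (ht1 : t ≤ 1) :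
    ‖J (y + t • m) - J y‖ ^ 2 ≤ ‖J (y + m) - J y‖ * ‖t • m‖ := by
  have hnear := hJ.norm_sub_sq_le_inner (y + t • m) y
  have hfar := hJ.norm_sub_sq_le_inner (y + m) (y + t • m)
  rw [add_sub_cancel_left, inner_smul_right] at hnear
  rw [show y + m - (y + t • m) = (1 - t) • m by module, inner_smul_right] at hfar
  have hmono : 0 ≤ ⟪J (y + m) - J (y + t • m), m⟫ := by
    rcases ht1.eq_or_lt with rfl | ht1
    · simp
    · exact nonneg_of_mul_nonneg_right ((sq_nonneg _).trans hfar) (sub_pos.2 ht1)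
  rw [← sub_sub_sub_cancel_right _ _ (J y), inner_sub_left] at hmono
  calc ‖J (y + t • m) - J y‖ ^ 2 ≤ t * ⟪J (y + t • m) - J y, m⟫ := hnear
    _ ≤ t * ⟪J (y + m) - J y, m⟫ := mul_le_mul_of_nonneg_left (by linarith) ht0
    _ = ⟪J (y + m) - J y, t • m⟫ := (inner_smul_right _ _ _).symm
    _ ≤ ‖J (y + m) - J y‖ * ‖t • m‖ := real_inner_le_norm _ _

end IsProxMap

lemma isBigO_sub_rev_of_hasFDerivAt_equiv {E F : Type*} [NormedAddCommGroup E] [NormedSpace ℝ E]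
    [NormedAddCommGroup F] [NormedSpace ℝ F] {g : E → F} {y : E} (A : E ≃L[ℝ] F)
    (hA : HasFDerivAt g (A : E →L[ℝ] F) y) :
    (fun m => m) =O[𝓝 0] fun m => g (y + m) - g y := by
  have hequiv : (fun m => m) =O[𝓝 0] fun m => A m := by simpa using A.isBigO_sub_rev (𝓝 0) 0
  have hrem : (fun m => g (y + m) - g y - A m) =o[𝓝 0] fun m => A m :=
    (hasFDerivAt_iff_isLittleO_nhds_zero.1 hA).trans_isBigO hequiv
  exact hequiv.trans (hrem.right_isBigO_add.congr_right fun m => sub_add_cancel _ _)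

namespace IsProxMap

/-- The monotonicity of `J` along rays prevents `J` from returning close to `J y` away from `y`. -/
lemma comap_nhds_le (hJ : IsProxMap f J) {y : E} (A : E ≃L[ℝ] E)
    (hA : HasFDerivAt J (A : E →L[ℝ] E) y) :
    comap (fun m => J (y + m) - J y) (𝓝 0) ≤ 𝓝 0 := by
  obtain ⟨C, hC, hlocal⟩ := (isBigO_sub_rev_of_hasFDerivAt_equiv A hA).exists_pos
  obtain ⟨r₀, hr₀, hball⟩ := Metric.eventually_nhds_iff_ball.1 hlocal.bound
  refine (nhds_basis_ball.comap _).le_basis_iff nhds_basis_ball |>.2 fun ε hε => ?_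
  set r := min (r₀ / 2) ε
  have hr0 : 0 < r := lt_min (half_pos hr₀) hε
  refine ⟨r / C ^ 2, by positivity, fun m hm => ?_⟩
  rw [mem_preimage, mem_ball_zero_iff, lt_div_iff₀ (by positivity)] at hm
  rw [mem_ball_zero_iff]
  refine lt_of_lt_of_le (b := r) ?_ (min_le_right _ _)
  by_contra! hrm
  have hm0 : 0 < ‖m‖ := hr0.trans_le hrm
  have hnorm : ‖(r / ‖m‖) • m‖ = r := by
    rw [norm_smul, norm_div, norm_norm, Real.norm_of_nonneg hr0.le, div_mul_cancel₀ _ hm0.ne']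
  have hexpand : r ≤ C * ‖J (y + (r / ‖m‖) • m) - J y‖ := by
    have := hball ((r / ‖m‖) • m)
    rw [mem_ball_zero_iff, hnorm] at this
    exact this ((min_le_left _ _).trans_lt (half_lt_self hr₀))
  have hray := hJ.norm_sub_sq_le_of_mem_ray y m (div_nonneg hr0.le hm0.le) ((div_le_one hm0).2 hrm)
  rw [hnorm] at hray
  have : r * r ≤ ‖J (y + m) - J y‖ * C ^ 2 * r :=
    calc r * r ≤ (C * ‖J (y + (r / ‖m‖) • m) - J y‖) ^ 2 := by
          rw [← sq]; gcongr
      _ ≤ C ^ 2 * (‖J (y + m) - J y‖ * r) := by rw [mul_pow]; gcongr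
      _ = ‖J (y + m) - J y‖ * C ^ 2 * r := by ring
  exact absurd (le_of_mul_le_mul_right this hr0) (not_le.2 hm)

lemma exists_lift_isBigO (hJ : IsProxMap f J) (hsub : ∀ x, ∃ q, HasSubgradientAt f q x) {y : E}
    (A : E ≃L[ℝ] E) (hA : HasFDerivAt J (A : E →L[ℝ] E) y) :
    ∃ m : E → E, (∀ k, J (y + m k) = J y + k) ∧ m =O[𝓝 0] fun k => k := by
  choose q hq using hsub
  set m : E → E := fun k => J y + k + q (J y + k) - y with hm
  have hJm (k : E) : J (y + m k) = J y + k := by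
    rw [hm, add_sub_cancel]
    exact hJ.apply_add_subgradient (hq _)
  have hinv : (fun m => J (y + m) - J y) ∘ m = id := funext fun k => by simp [hJm]
  have hm0 : Tendsto m (𝓝 0) (𝓝 0) :=
    (tendsto_comap_iff.2 (by rw [hinv]; exact tendsto_id)).mono_right (hJ.comap_nhds_le A hA)
  exact ⟨m, hJm, ((isBigO_sub_rev_of_hasFDerivAt_equiv A hA).comp_tendsto hm0).congr_right
    (congrFun hinv)⟩

lemma isSymmetric_symm (hJ : IsProxMap f J) {y : E} (A : E ≃L[ℝ] E)
    (hA : HasFDerivAt J (A : E →L[ℝ] E) y) : ((A.symm : E →L[ℝ] E) : E →ₗ[ℝ] E).IsSymmetric := by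
  intro v w
  have := (hJ.hasTaylorTwoAt_moreauEnvelope hA).isSymmetric (A.symm v) (A.symm w)
  simp only [ContinuousLinearMap.toLinearMap_sub, ContinuousLinearMap.coe_id,
    ContinuousLinearEquiv.toLinearMap_toContinuousLinearMap, LinearMap.sub_apply, LinearMap.id_coe,
    id_eq, LinearEquiv.coe_coe, ContinuousLinearEquiv.coe_toLinearEquiv,
    ContinuousLinearEquiv.apply_symm_apply, inner_sub_left, inner_sub_right, sub_right_inj] at this
  simpa using this.symm

/-- With `J (y + m) = J y + k`, the expansion of the envelope at `y` in powers of `m` becomes one of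
`f` at `J y` in powers of `k`, since `A m = k + o(k)`. -/
lemma hasTaylorTwoAt (hJ : IsProxMap f J) (hsub : ∀ x, ∃ q, HasSubgradientAt f q x) {y : E}
    (A : E ≃L[ℝ] E) (hA : HasFDerivAt J (A : E →L[ℝ] E) y) :
    HasTaylorTwoAt f (y - J y) ((A.symm : E →L[ℝ] E) - ContinuousLinearMap.id ℝ E) (J y) := by
  obtain ⟨m, hJm, hmO⟩ := hJ.exists_lift_isBigO hsub A hA
  have hm0 : Tendsto m (𝓝 0) (𝓝 0) := hmO.trans_tendsto tendsto_id
  set ρ : E → E := fun k => k - A (m k) with hρ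
  have hρo : ρ =o[𝓝 0] fun k : E => k :=
    (((hasFDerivAt_iff_isLittleO_nhds_zero.1 hA).comp_tendsto hm0).trans_isBigO hmO).congr_left
      fun k => by simp [hJm, hρ]
  have henv : (fun k => moreauEnvelope f J (y + m k) - moreauEnvelope f J y - ⟪y - J y, m k⟫
      - ⟪m k - A (m k), m k⟫ / 2) =o[𝓝 0] fun k : E => ‖k‖ ^ 2 :=
    ((hJ.hasTaylorTwoAt_moreauEnvelope hA).isLittleO.comp_tendsto hm0).trans_isBigO
      (hmO.norm_norm.pow 2)
  have hρm := inner_isLittleO_norm_sq hρo hmO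
  have hρk := inner_isLittleO_norm_sq
    (((A.symm : E →L[ℝ] E).isBigO_comp ρ (𝓝 0)).trans_isLittleO hρo) (isBigO_refl _ _)
  refine ⟨(hJ.isSymmetric_symm A hA).sub LinearMap.IsSymmetric.id,
    ((henv.add (hρm.const_mul_left (1 / 2))).sub (hρk.const_mul_left (1 / 2))).congr_left
      fun k => ?_⟩
  have hAm : A (m k) = k - ρ k := by simp [hρ]
  have hAk : A.symm k = m k + A.symm (ρ k) := by simp [hρ]
  have hsq : ‖y + m k - (J y + k)‖ ^ 2 = ‖y - J y‖ ^ 2 + 2 * ⟪y - J y, m k - k⟫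
      + (‖m k‖ ^ 2 - 2 * ⟪m k, k⟫ + ‖k‖ ^ 2) := by
    rw [← norm_sub_sq_real, ← norm_add_sq_real, add_sub_add_comm]
  have hcomm := real_inner_comm (m k) k
  simp only [moreauEnvelope, hJm, hAm, hsq, sub_apply, ContinuousLinearEquiv.coe_coe,
    ContinuousLinearMap.id_apply, hAk, inner_sub_left, inner_sub_right, inner_add_left,
    real_inner_self_eq_norm_sq] at hcomm ⊢
  linarith

end IsProxMap

lemma addHaar_image_eq_zero_of_lipschitzOnWith {F : Type*} [NormedAddCommGroup F] [NormedSpace ℝ F]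
    [FiniteDimensional ℝ F] [MeasurableSpace F] [BorelSpace F] (μ : Measure F) [μ.IsAddHaarMeasure]
    {g : F → F} {K : NNReal} {s : Set F} (hg : LipschitzOnWith K g s) (hs : μ s = 0) :
    μ (g '' s) = 0 := by
  have hhaar : (Measure.hausdorffMeasure (Module.finrank ℝ F) : Measure F).IsAddHaarMeasure :=
    isAddHaarMeasure_hausdorffMeasure
  have hle := hg.hausdorffMeasure_image_le (d := Module.finrank ℝ F) (Nat.cast_nonneg _)
  rw [Measure.absolutelyContinuous_isAddHaarMeasure _ μ hs, mul_zero] at hle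
  exact Measure.absolutelyContinuous_isAddHaarMeasure _ _ (le_antisymm hle bot_le)

theorem ae_hasTaylorTwoAt_of_convexOn [FiniteDimensional ℝ E] [MeasurableSpace E] [BorelSpace E]
    (μ : Measure E) [μ.IsAddHaarMeasure] (hconv : ConvexOn ℝ univ f) :
    ∀ᵐ x ∂μ, ∃ p B, HasTaylorTwoAt f p B x := by
  obtain ⟨J, hJ⟩ := exists_isProxMap hconv
  have hsub := exists_hasSubgradientAt hconv hconv.locallyLipschitz.continuous
  have hnondiff : μ (J '' {y | ¬DifferentiableAt ℝ J y}) = 0 :=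
    addHaar_image_eq_zero_of_lipschitzOnWith μ hJ.lipschitzWith.lipschitzOnWith
      hJ.lipschitzWith.ae_differentiableAt
  have hsingular : μ (J '' {y | DifferentiableAt ℝ J y ∧ (fderiv ℝ J y).det = 0}) = 0 :=
    addHaar_image_eq_zero_of_det_fderivWithin_eq_zero μ
      (fun y hy => hy.1.hasFDerivAt.hasFDerivWithinAt) fun y hy => hy.2
  filter_upwards [measure_eq_zero_iff_ae_notMem.1 hnondiff,
    measure_eq_zero_iff_ae_notMem.1 hsingular] with x hxdiff hxdet
  obtain ⟨q, hq⟩ := hsub x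
  have hJx : J (x + q) = x := hJ.apply_add_subgradient hq
  have hdiff : DifferentiableAt ℝ J (x + q) := not_not.1 fun hn => hxdiff ⟨x + q, hn, hJx⟩
  have hdet : (fderiv ℝ J (x + q)).det ≠ 0 := fun h0 => hxdet ⟨x + q, ⟨hdiff, h0⟩, hJx⟩
  have := hJ.hasTaylorTwoAt hsub ((fderiv ℝ J (x + q)).toContinuousLinearEquivOfDetNeZero hdet)
    (y := x + q) (by simpa using hdiff.hasFDerivAt)
  rw [hJx] at this
  exact ⟨_, _, this⟩

end Alexandrov

/-! ### Semiconvex functions and Jensen's lemma -/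

section Semiconvex

variable {E : Type*} [NormedAddCommGroup E] [InnerProductSpace ℝ E] {f g : E → ℝ} {c c' : ℝ}

/-- Semiconvexity with constant `c` on the whole space; for `C²` functions it says that the
Hessian is bounded below by `-c`. -/
def IsSemiconvex (c : ℝ) (f : E → ℝ) : Prop :=
  ConvexOn ℝ univ fun w => f w + c / 2 * ‖w‖ ^ 2

namespace IsSemiconvex

lemma add (hf : IsSemiconvex c f) (hg : IsSemiconvex c' g) :
    IsSemiconvex (c + c') fun w => f w + g w :=
  (ConvexOn.add hf hg).congr fun w _ => by simp only [Pi.add_apply]; ring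

lemma continuous [FiniteDimensional ℝ E] (hf : IsSemiconvex c f) : Continuous f := by
  have hcont := (ConvexOn.locallyLipschitz hf).continuous
  exact (hcont.sub (g := fun w => c / 2 * ‖w‖ ^ 2) (by fun_prop)).congr fun w =>
    add_sub_cancel_right _ _

lemma ae_hasTaylorTwoAt [FiniteDimensional ℝ E] [MeasurableSpace E] [BorelSpace E]
    (hf : IsSemiconvex c f) (μ : Measure E) [μ.IsAddHaarMeasure] :
    ∀ᵐ x ∂μ, ∃ p B, HasTaylorTwoAt f p B x := by
  filter_upwards [ae_hasTaylorTwoAt_of_convexOn μ hf] with x ⟨p, B, hB⟩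
  have hadd := hB.add (hasTaylorTwoAt_const_mul_norm_sq (-(c / 2)) x)
  have hcancel (w : E) : f w + c / 2 * ‖w‖ ^ 2 + -(c / 2) * ‖w‖ ^ 2 = f w := by ring
  simp only [hcancel] at hadd
  exact ⟨_, _, hadd⟩

lemma add_inner_sub_le_of_isMaxOn (hf : IsSemiconvex c f) {p x : E}
    (hx : IsMaxOn (fun w => f w - ⟪p, w⟫) univ x) (w : E) :
    f x + ⟪p, w - x⟫ - c / 2 * ‖w - x‖ ^ 2 ≤ f w := by
  have hsq (w : E) : ‖w‖ ^ 2 = ‖x‖ ^ 2 + 2 * ⟪x, w - x⟫ + ‖w - x‖ ^ 2 := by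
    rw [← norm_add_sq_real, add_sub_cancel]
  have hsub : HasSubgradientAt (fun w => f w + c / 2 * ‖w‖ ^ 2) (p + c • x) x := by
    refine hasSubgradientAt_of_le_paraboloid hf (C := c / 2) fun w => ?_
    have hw := isMaxOn_univ_iff.1 hx w
    rw [inner_add_left, real_inner_smul_left, hsq w, inner_sub_right p]
    linarith
  have hw := hsub w
  beta_reduce at hw
  rw [inner_add_left, real_inner_smul_left, hsq w] at hw
  linarith

lemma norm_slope_sub_le (hc : 0 < c) (hf : IsSemiconvex c f) {p p' x x' : E}
    (hx : IsMaxOn (fun w => f w - ⟪p, w⟫) univ x)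
    (hx' : IsMaxOn (fun w => f w - ⟪p', w⟫) univ x') : ‖p - p'‖ ≤ c * ‖x - x'‖ := by
  set r := p' - p with hr
  have hx'_below := hf.add_inner_sub_le_of_isMaxOn hx x'
  have hbelow := hf.add_inner_sub_le_of_isMaxOn hx' (x' + c⁻¹ • r)
  have habove := isMaxOn_univ_iff.1 hx (x' + c⁻¹ • r)
  rw [add_sub_cancel_left, inner_smul_right, norm_smul, mul_pow, Real.norm_eq_abs, sq_abs] at hbelow
  rw [inner_add_right, inner_smul_right] at habove
  rw [inner_sub_right] at hx'_below
  have hself : ‖r‖ ^ 2 = ⟪p', r⟫ - ⟪p, r⟫ := by rw [← inner_sub_left, real_inner_self_eq_norm_sq]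
  have hsq : c / 2 * (c⁻¹ ^ 2 * ‖r‖ ^ 2) = c⁻¹ * ‖r‖ ^ 2 / 2 := by field_simp
  have hle : c⁻¹ * ‖r‖ ^ 2 ≤ c * ‖x - x'‖ ^ 2 := by
    rw [norm_sub_rev x x']
    linear_combination 2 * (hx'_below + hbelow + habove) + 2 * c⁻¹ * hself + 2 * hsq
  rw [inv_mul_le_iff₀ hc, ← mul_assoc, ← pow_two, ← mul_pow] at hle
  rw [norm_sub_rev, ← hr]
  exact le_of_sq_le_sq hle (by positivity)

end IsSemiconvex

/-- The points above which an affine function of slope less than `δ` touches the graph of `f` from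
above. -/
def upperContactSet (f : E → ℝ) (δ : ℝ) : Set E :=
  {x | ∃ p ∈ ball 0 δ, IsMaxOn (fun w => f w - ⟪p, w⟫) univ x}

/-- The slopes fill the ball and are a Lipschitz function of the contact points. -/
lemma IsSemiconvex.addHaar_upperContactSet_ne_zero [FiniteDimensional ℝ E] [MeasurableSpace E]
    [BorelSpace E] (μ : Measure E) [μ.IsAddHaarMeasure] (hc : 0 < c) (hf : IsSemiconvex c f)
    {δ : ℝ} (hδ : 0 < δ)
    (hmax : ∀ p ∈ ball (0 : E) δ, ∃ x, IsMaxOn (fun w => f w - ⟪p, w⟫) univ x) :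
    μ (upperContactSet f δ) ≠ 0 := by
  choose! slope _ hslope using
    show ∀ x ∈ upperContactSet f δ, ∃ p ∈ ball 0 δ, IsMaxOn (fun w => f w - ⟪p, w⟫) univ x from
      fun x hx => hx
  have hlip : LipschitzOnWith ⟨c, hc.le⟩ slope (upperContactSet f δ) :=
    LipschitzOnWith.of_dist_le_mul fun x hx x' hx' => by
      simpa only [dist_eq_norm] using! hf.norm_slope_sub_le hc (hslope x hx) (hslope x' hx')
  have hsurj : ball 0 δ ⊆ slope '' upperContactSet f δ := by
    intro p hp
    obtain ⟨x, hx⟩ := hmax p hp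
    have hmem : x ∈ upperContactSet f δ := ⟨p, hp, hx⟩
    have hle := hf.norm_slope_sub_le hc (hslope x hmem) hx
    rw [sub_self, norm_zero, mul_zero] at hle
    exact ⟨x, hmem, sub_eq_zero.1 (norm_le_zero_iff.1 hle)⟩
  intro hzero
  exact (measure_ball_pos μ (0 : E) hδ).ne'
    (measure_mono_null hsurj (addHaar_image_eq_zero_of_lipschitzOnWith μ hlip hzero))

lemma exists_isMaxOn_sub_inner [ProperSpace E] (hf : Continuous f) {a C : ℝ} (ha : 0 < a)
    (hle : ∀ w, f w ≤ C - a * ‖w‖ ^ 2) (p : E) :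
    ∃ x, IsMaxOn (fun w => f w - ⟪p, w⟫) univ x := by
  have hlim : Tendsto (fun t : ℝ => C + t * (‖p‖ - a * t)) atTop atBot :=
    tendsto_atBot_add_const_left _ _ <| tendsto_id.atTop_mul_atBot₀ <|
      tendsto_atBot_add_const_left _ _ <| tendsto_neg_atTop_atBot.comp <|
        tendsto_id.const_mul_atTop ha
  have hbound (w : E) : f w - ⟪p, w⟫ ≤ C + ‖w‖ * (‖p‖ - a * ‖w‖) := by
    linarith [hle w, (abs_le.1 (abs_real_inner_le_norm p w)).1]
  obtain ⟨x, hx⟩ := Continuous.exists_forall_ge (by fun_prop : Continuous fun w => f w - ⟪p, w⟫)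
    (tendsto_atBot_mono hbound (hlim.comp tendsto_norm_cocompact_atTop))
  exact ⟨x, isMaxOn_univ_iff.2 hx⟩

end Semiconvex

/-! ### Superjets and sup-convolutions -/

section Superjet

variable {E : Type*} [NormedAddCommGroup E] [InnerProductSpace ℝ E]

/-- `(P, X)` belongs to the second-order superjet `J^{2,+} u(ξ)`. The error `o(‖k‖²)` of the usual
definition is one-sided here, hence spelled out. -/
structure HasSuperjetAt (u : E → ℝ) (P : E) (X : E →L[ℝ] E) (ξ : E) : Prop where
  isSymmetric : (X : E →ₗ[ℝ] E).IsSymmetric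
  eventually_le : ∀ τ > 0, ∀ᶠ k in 𝓝 0,
    u (ξ + k) ≤ u ξ + ⟪P, k⟫ + ⟪X k, k⟫ / 2 + τ * ‖k‖ ^ 2

lemma HasTaylorTwoAt.hasSuperjetAt {f u : E → ℝ} {P x ξ : E} {X : E →L[ℝ] E}
    (hf : HasTaylorTwoAt f P X x) (hle : ∀ᶠ k in 𝓝 0, u (ξ + k) - u ξ ≤ f (x + k) - f x) :
    HasSuperjetAt u P X ξ := by
  refine ⟨hf.isSymmetric, fun τ hτ => ?_⟩
  filter_upwards [hle, isLittleO_iff.1 hf.isLittleO hτ] with k hk hrem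
  rw [norm_pow, norm_norm, Real.norm_eq_abs] at hrem
  linarith [le_of_abs_le hrem]

end Superjet

section SupConv

variable {d : ℕ} {Ω : Set (Eucl d)} {u : Eucl d → ℝ} {ε : ℝ}

lemma le_supConv (hΩ : Bornology.IsBounded Ω) (hu : ContinuousOn u (closure Ω)) (ε : ℝ)
    (x : Eucl d) {y : Eucl d} (hy : y ∈ closure Ω) :
    u y - ‖x - y‖ ^ 2 / (2 * ε) ≤ supConv Ω u ε x :=
  le_csSup (hΩ.isCompact_closure.bddAbove_image (hu.sub (by fun_prop))) (mem_image_of_mem _ hy)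

lemma exists_supConv_eq (hΩ : Bornology.IsBounded Ω) (hne : Ω.Nonempty)
    (hu : ContinuousOn u (closure Ω)) (ε : ℝ) (x : Eucl d) :
    ∃ ξ ∈ closure Ω, supConv Ω u ε x = u ξ - ‖x - ξ‖ ^ 2 / (2 * ε) :=
  hΩ.isCompact_closure.exists_sSup_image_eq hne.closure (hu.sub (by fun_prop))

/-- Up to the quadratic term, the sup-convolution is a supremum of affine functions. -/
lemma isSemiconvex_supConv (hΩ : Bornology.IsBounded Ω) (hne : Ω.Nonempty)
    (hu : ContinuousOn u (closure Ω)) (ε : ℝ) : IsSemiconvex ε⁻¹ (supConv Ω u ε) := by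
  refine ⟨convex_univ, fun x _ y _ a b ha hb hab => ?_⟩
  obtain ⟨ξ, hξ, heq⟩ := exists_supConv_eq hΩ hne hu ε (a • x + b • y)
  have haffine (w : Eucl d) : u ξ - ‖w - ξ‖ ^ 2 / (2 * ε) + ε⁻¹ / 2 * ‖w‖ ^ 2
      = u ξ - ε⁻¹ / 2 * ‖ξ‖ ^ 2 + ε⁻¹ * ⟪w, ξ⟫ := by
    rw [norm_sub_sq_real, div_eq_mul_inv, mul_inv]
    ring
  have hbelow (w : Eucl d) : u ξ - ε⁻¹ / 2 * ‖ξ‖ ^ 2 + ε⁻¹ * ⟪w, ξ⟫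
      ≤ supConv Ω u ε w + ε⁻¹ / 2 * ‖w‖ ^ 2 := by
    rw [← haffine]
    gcongr
    exact le_supConv hΩ hu ε w hξ
  calc supConv Ω u ε (a • x + b • y) + ε⁻¹ / 2 * ‖a • x + b • y‖ ^ 2
      = a • (u ξ - ε⁻¹ / 2 * ‖ξ‖ ^ 2 + ε⁻¹ * ⟪x, ξ⟫)
        + b • (u ξ - ε⁻¹ / 2 * ‖ξ‖ ^ 2 + ε⁻¹ * ⟪y, ξ⟫) := by
        rw [heq, haffine, inner_add_left, real_inner_smul_left, real_inner_smul_left, smul_eq_mul,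
          smul_eq_mul]
        linear_combination (ε⁻¹ / 2 * ‖ξ‖ ^ 2 - u ξ) * hab
    _ ≤ _ := add_le_add (smul_le_smul_of_nonneg_left (hbelow x) ha)
        (smul_le_smul_of_nonneg_left (hbelow y) hb)

lemma supConv_le_sub_mul_norm_sq (hε : 0 < ε) {M R : ℝ} (hM : ∀ y ∈ closure Ω, u y ≤ M)
    (hR : ∀ y ∈ closure Ω, ‖y‖ ≤ R) (hne : Ω.Nonempty) (x : Eucl d) :
    supConv Ω u ε x ≤ M + R ^ 2 / (2 * ε) - 1 / (4 * ε) * ‖x‖ ^ 2 := by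
  refine csSup_le (hne.closure.image _) (forall_mem_image.2 fun y hy => ?_)
  have hyR : ‖y‖ ^ 2 ≤ R ^ 2 := by gcongr; exact hR y hy
  have hsq : ‖x‖ ^ 2 ≤ 2 * ‖x - y‖ ^ 2 + 2 * R ^ 2 := by
    have := norm_add_le (x - y) y
    rw [sub_add_cancel] at this
    nlinarith [norm_nonneg x, sq_nonneg (‖x - y‖ - ‖y‖)]
  have hdiv : 1 / (4 * ε) * ‖x‖ ^ 2 ≤ 1 / (4 * ε) * (2 * ‖x - y‖ ^ 2 + 2 * R ^ 2) := by gcongr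
  rw [show 1 / (4 * ε) * (2 * ‖x - y‖ ^ 2 + 2 * R ^ 2)
    = ‖x - y‖ ^ 2 / (2 * ε) + R ^ 2 / (2 * ε) by field_simp; ring] at hdiv
  linarith [hM y hy]

/-- Moving `x` and `ξ` together leaves the penalty `‖x - ξ‖²` unchanged. -/
lemma HasTaylorTwoAt.hasSuperjetAt_of_supConv (hΩo : IsOpen Ω) (hΩ : Bornology.IsBounded Ω)
    (hu : ContinuousOn u (closure Ω)) {x ξ P : Eucl d} {X : Eucl d →L[ℝ] Eucl d}
    (hX : HasTaylorTwoAt (supConv Ω u ε) P X x) (hξ : ξ ∈ Ω)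
    (heq : supConv Ω u ε x = u ξ - ‖x - ξ‖ ^ 2 / (2 * ε)) : HasSuperjetAt u P X ξ := by
  refine hX.hasSuperjetAt ?_
  have hmem : ∀ᶠ k in 𝓝 0, ξ + k ∈ Ω :=
    (continuous_const_add ξ).tendsto' _ _ (add_zero ξ) (hΩo.mem_nhds hξ)
  filter_upwards [hmem] with k hk
  have hle := le_supConv hΩ hu ε (x + k) (subset_closure hk)
  rw [add_sub_add_right_eq_sub] at hle
  linarith

end SupConv

/-! ### Viscosity inequalities for superjets -/

section Viscosity

variable {d : ℕ} {Ω : Set (Eucl d)} {G : Matrix (Fin d) (Fin d) ℝ → Eucl d → ℝ → Eucl d → ℝ}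
  {g u : Eucl d → ℝ}

lemma gradAt_eq_of_hasFDerivAt {φ : Eucl d → ℝ} {P ξ : Eucl d}
    (hφ : HasFDerivAt φ (innerSL ℝ P) ξ) : gradAt φ ξ = P := by
  ext i
  simp [gradAt, hφ.fderiv, EuclideanSpace.inner_single_right]

lemma hessAt_eq_of_hasFDerivAt {φ : Eucl d → ℝ} {p : Eucl d → Eucl d} {ξ : Eucl d}
    {M : Matrix (Fin d) (Fin d) ℝ} (hφ : ∀ ζ, HasFDerivAt φ (innerSL ℝ (p ζ)) ζ)
    (hp : HasFDerivAt p (Matrix.toEuclideanCLM (𝕜 := ℝ) M.transpose) ξ) : hessAt φ ξ = M := by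
  ext i j
  have hcoord : HasFDerivAt (fun ζ => ⟪p ζ, EuclideanSpace.single j 1⟫) _ ξ :=
    hp.inner ℝ (hasFDerivAt_const (EuclideanSpace.single j (1 : ℝ)) ξ)
  simp only [hessAt, Matrix.of_apply, (hφ _).fderiv, innerSL_apply_apply, hcoord.fderiv]
  simp [fderivInnerCLM_apply, EuclideanSpace.inner_single_right, Matrix.ofLp_toEuclideanCLM]

/-- The paraboloid vanishing at `ξ` with gradient `P` and Hessian `A` there, used as a test
function. -/
def paraboloid (P : Eucl d) (A : Matrix (Fin d) (Fin d) ℝ) (ξ ζ : Eucl d) : ℝ :=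
  ⟪P, ζ - ξ⟫ + ⟪Matrix.toEuclideanCLM (𝕜 := ℝ) A (ζ - ξ), ζ - ξ⟫ / 2

section Paraboloid

lemma contDiff_paraboloid (P : Eucl d) (A : Matrix (Fin d) (Fin d) ℝ) (ξ : Eucl d) :
    ContDiff ℝ 2 (paraboloid P A ξ) := by
  have hsub : ContDiff ℝ 2 fun ζ : Eucl d => ζ - ξ := contDiff_id.sub contDiff_const
  exact (contDiff_const.inner ℝ hsub).add
    ((((Matrix.toEuclideanCLM (𝕜 := ℝ) A).contDiff.comp hsub).inner ℝ hsub).div_const 2)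

variable {A : Matrix (Fin d) (Fin d) ℝ}

lemma hasFDerivAt_paraboloid (hA : A.IsHermitian) (P ξ ζ : Eucl d) : HasFDerivAt (paraboloid P A ξ)
    (innerSL ℝ (P + Matrix.toEuclideanCLM (𝕜 := ℝ) A (ζ - ξ))) ζ := by
  have hsub := (hasFDerivAt_id (𝕜 := ℝ) ζ).sub_const ξ
  have hquad := (hasFDerivAt_comp_sub ξ).2 <| hasFDerivAt_inner_apply_self_half
    (A := Matrix.toEuclideanCLM (𝕜 := ℝ) A) (Matrix.isSymmetric_toEuclideanLin_iff.2 hA) (ζ - ξ)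
  rw [map_add]
  exact ((innerSL ℝ P).hasFDerivAt.comp ζ hsub).add hquad

lemma gradAt_paraboloid (hA : A.IsHermitian) (P ξ : Eucl d) :
    gradAt (paraboloid P A ξ) ξ = P :=
  gradAt_eq_of_hasFDerivAt (by simpa using hasFDerivAt_paraboloid hA P ξ ξ)

lemma hessAt_paraboloid (hA : A.IsHermitian) (P ξ : Eucl d) :
    hessAt (paraboloid P A ξ) ξ = A := by
  refine hessAt_eq_of_hasFDerivAt (hasFDerivAt_paraboloid hA P ξ) ?_
  rw [← Matrix.conjTranspose_eq_transpose_of_trivial, hA.eq]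
  exact ((Matrix.toEuclideanCLM (𝕜 := ℝ) A).hasFDerivAt.comp ξ
    ((hasFDerivAt_id ξ).sub_const ξ)).const_add P

end Paraboloid

lemma gradAt_neg (φ : Eucl d → ℝ) (x : Eucl d) : gradAt (fun y => -φ y) x = -gradAt φ x := by
  ext i
  simp [gradAt, fderiv_fun_neg]

lemma hessAt_neg (φ : Eucl d → ℝ) (x : Eucl d) : hessAt (fun y => -φ y) x = -hessAt φ x := by
  ext i j
  simp [hessAt, fderiv_fun_neg]

lemma ViscSupersol.neg (hu : ViscSupersol Ω G g u) :
    ViscSubsol Ω (fun M P r x => -G (-M) (-P) (-r) x) (fun x => -g x) fun x => -u x := by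
  intro x hx φ hφ hmax
  have hmin : IsLocalMin (fun y => u y - -φ y) x := by
    convert! hmax.neg using 2 with y
    ring
  have := hu x hx (fun y => -φ y) hφ.neg hmin
  rw [gradAt_neg, hessAt_neg] at this
  simpa using this

lemma ViscSubsol.le_of_hasSuperjetAt (hu : ViscSubsol Ω G g u) {ξ P : Eucl d} (hξ : ξ ∈ Ω)
    {M : Matrix (Fin d) (Fin d) ℝ} (hM : HasSuperjetAt u P (Matrix.toEuclideanCLM (𝕜 := ℝ) M) ξ)
    {τ : ℝ} (hτ : 0 < τ) : G (M + τ • 1) P (u ξ) ξ ≤ g ξ := by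
  have hherm : (M + τ • 1).IsHermitian :=
    (Matrix.isSymmetric_toEuclideanLin_iff.1 hM.isSymmetric).add
      (Matrix.isHermitian_one.smul (IsSelfAdjoint.all τ))
  have hmax : IsLocalMax (fun ζ => u ζ - paraboloid P (M + τ • 1) ξ ζ) ξ := by
    rw [IsLocalMax, IsMaxFilter, ← map_add_left_nhds_zero ξ, eventually_map]
    filter_upwards [hM.eventually_le (τ / 2) (half_pos hτ)] with k hk
    simp only [paraboloid, add_sub_cancel_left, map_add, map_smul, map_one, add_apply, smul_apply,
      one_apply_eq_self, inner_add_left, real_inner_smul_left,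
      real_inner_self_eq_norm_sq, sub_self, inner_zero_right]
    linarith
  have hvisc := hu ξ hξ _ (contDiff_paraboloid P (M + τ • 1) ξ).contDiffAt hmax
  rwa [gradAt_paraboloid hherm, hessAt_paraboloid hherm] at hvisc

end Viscosity

/-! ### The theorem on sums -/

section Sums

/-- The upper contact set has positive measure, so it meets the set of full measure where both
expansions exist. -/
lemma IsSemiconvex.exists_isMaxOn_hasTaylorTwoAt {E : Type*} [NormedAddCommGroup E]
    [InnerProductSpace ℝ E] [FiniteDimensional ℝ E] {f g : E → ℝ} {c c' a C δ : ℝ}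
    (hf : IsSemiconvex c f) (hg : IsSemiconvex c' g) (hc : 0 < c + c') (ha : 0 < a)
    (hle : ∀ w, f w + g w ≤ C - a * ‖w‖ ^ 2) (hδ : 0 < δ) :
    ∃ x P Q X Z, ‖P + Q‖ < δ ∧ IsMaxOn (fun w => f w + g w - ⟪P + Q, w⟫) univ x ∧
      HasTaylorTwoAt f P X x ∧ HasTaylorTwoAt g Q Z x ∧ ∀ k, ⟪(X + Z) k, k⟫ ≤ 0 := by
  borelize E
  have hfg := hf.add hg
  have hcontact := hfg.addHaar_upperContactSet_ne_zero volume hc hδ fun p _ =>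
    exists_isMaxOn_sub_inner hfg.continuous ha hle p
  obtain ⟨x, ⟨p, hp, hmax⟩, ⟨P, X, hX⟩, Q, Z, hZ⟩ :=
    ((frequently_ae_mem_iff.2 hcontact).and_eventually
      ((hf.ae_hasTaylorTwoAt volume).and (hg.ae_hasTaylorTwoAt volume))).exists
  have hloc := hmax.isLocalMax univ_mem
  obtain rfl := (hX.add hZ).gradient_eq_of_isLocalMax hloc
  exact ⟨x, P, Q, X, Z, mem_ball_zero_iff.1 hp, hmax, hX, hZ,
    (hX.add hZ).inner_hessian_nonpos_of_isLocalMax hloc⟩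

variable {d : ℕ} {Ω : Set (Eucl d)} {u w : Eucl d → ℝ}

/-- The penalty terms of the sup-convolutions absorb the linear perturbation and still control the
distance of `ξ` and `η`. -/
lemma add_norm_sq_div_le_of_isMaxOn_supConv (hΩ : Bornology.IsBounded Ω)
    (hu : ContinuousOn u (closure Ω)) (hw : ContinuousOn w (closure Ω)) {R : ℝ}
    (hR : ∀ y ∈ closure Ω, ‖y‖ ≤ R) {ε : ℝ} (hε : ε ∈ Ioc 0 (1 / 4)) {x x₀ ξ η p : Eucl d}
    (hp : ‖p‖ ≤ 1)
    (hmax : IsMaxOn (fun y => supConv Ω u ε y + supConv Ω w ε y - ⟪p, y⟫) univ x)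
    (hξ : ξ ∈ closure Ω) (huξ : supConv Ω u ε x = u ξ - ‖x - ξ‖ ^ 2 / (2 * ε))
    (hwη : supConv Ω w ε x = w η - ‖x - η‖ ^ 2 / (2 * ε)) (hx₀ : x₀ ∈ closure Ω) :
    u x₀ + w x₀ + ‖ξ - η‖ ^ 2 / (8 * ε) ≤ u ξ + w η + ‖p‖ * (2 * R + 1) := by
  obtain ⟨hε0, hε4⟩ := hε
  have hmax₀ := isMaxOn_univ_iff.1 hmax x₀
  have hu₀ := le_supConv hΩ hu ε x₀ hx₀
  have hw₀ := le_supConv hΩ hw ε x₀ hx₀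
  rw [sub_self, norm_zero, zero_pow two_ne_zero, zero_div, sub_zero] at hu₀ hw₀
  have hdist : ‖x₀ - x‖ ≤ 2 * R + 1 + ‖x - ξ‖ ^ 2 := by
    have htri := norm_sub_le_norm_sub_add_norm_sub x₀ ξ x
    rw [norm_sub_rev ξ x] at htri
    nlinarith [norm_sub_le x₀ ξ, hR x₀ hx₀, hR ξ hξ, sq_nonneg (‖x - ξ‖ - 1)]
  have hlin : ⟪p, x₀⟫ - ⟪p, x⟫ ≤ ‖p‖ * (2 * R + 1) + ‖x - ξ‖ ^ 2 :=
    calc ⟪p, x₀⟫ - ⟪p, x⟫ = ⟪p, x₀ - x⟫ := (inner_sub_right _ _ _).symm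
      _ ≤ ‖p‖ * (2 * R + 1 + ‖x - ξ‖ ^ 2) := (real_inner_le_norm _ _).trans (by gcongr)
      _ ≤ _ := by rw [mul_add]; gcongr; exact mul_le_of_le_one_left (sq_nonneg _) hp
  have habsorb : ‖x - ξ‖ ^ 2 ≤ (‖x - ξ‖ ^ 2 + ‖x - η‖ ^ 2) / (4 * ε) := by
    rw [le_div_iff₀ (by positivity)]
    nlinarith [sq_nonneg ‖x - ξ‖, sq_nonneg ‖x - η‖]
  have hclose : ‖ξ - η‖ ^ 2 / (8 * ε) ≤ (‖x - ξ‖ ^ 2 + ‖x - η‖ ^ 2) / (4 * ε) := by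
    have htri := norm_sub_le_norm_sub_add_norm_sub ξ x η
    rw [norm_sub_rev ξ x] at htri
    rw [div_le_div_iff₀ (by positivity) (by positivity)]
    have hsq : ‖ξ - η‖ ^ 2 ≤ 2 * (‖x - ξ‖ ^ 2 + ‖x - η‖ ^ 2) := by
      nlinarith [norm_nonneg (ξ - η), sq_nonneg (‖x - ξ‖ - ‖x - η‖)]
    nlinarith
  have hsplit : (‖x - ξ‖ ^ 2 + ‖x - η‖ ^ 2) / (4 * ε) + (‖x - ξ‖ ^ 2 + ‖x - η‖ ^ 2) / (4 * ε)
      = ‖x - ξ‖ ^ 2 / (2 * ε) + ‖x - η‖ ^ 2 / (2 * ε) := by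
    field_simp
    ring
  linarith

lemma exists_forall_norm_sub_lt_mem_of_le_add (hΩo : IsOpen Ω) (hΩ : Bornology.IsBounded Ω)
    (hu : ContinuousOn u (closure Ω)) (hw : ContinuousOn w (closure Ω))
    (hfr : ∀ y ∈ frontier Ω, u y + w y ≤ 0) {ρ : ℝ} (hρ : 0 < ρ) :
    ∃ s > 0, ∀ ξ ∈ closure Ω, ∀ η ∈ closure Ω, ‖ξ - η‖ < s → ρ ≤ u ξ + w η → ξ ∈ Ω ∧ η ∈ Ω := by
  have hK := hΩ.isCompact_closure
  obtain ⟨s, hs, hus⟩ :=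
    Metric.uniformContinuousOn_iff.1 (hK.uniformContinuousOn_of_continuous hu) ρ hρ
  obtain ⟨s', hs', hws⟩ :=
    Metric.uniformContinuousOn_iff.1 (hK.uniformContinuousOn_of_continuous hw) ρ hρ
  simp only [dist_eq_norm, Real.norm_eq_abs, abs_lt] at hus hws
  refine ⟨min s s', lt_min hs hs', fun ξ hξ η hη hlt hle => ?_⟩
  rw [lt_min_iff] at hlt
  have hu_near := hus ξ hξ η hη hlt.1
  have hw_near := hws ξ hξ η hη hlt.2
  constructor <;> by_contra hmem
  · have := hfr ξ (hΩo.frontier_eq ▸ ⟨hξ, hmem⟩)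
    linarith
  · have := hfr η (hΩo.frontier_eq ▸ ⟨hη, hmem⟩)
    linarith

lemma exists_isMaxOn_supConv_hasTaylorTwoAt (hΩ : Bornology.IsBounded Ω) (hne : Ω.Nonempty)
    (hu : ContinuousOn u (closure Ω)) (hw : ContinuousOn w (closure Ω)) {ε δ : ℝ} (hε : 0 < ε)
    (hδ : 0 < δ) :
    ∃ x P Q X Z, ‖P + Q‖ < δ ∧
      IsMaxOn (fun y => supConv Ω u ε y + supConv Ω w ε y - ⟪P + Q, y⟫) univ x ∧
      HasTaylorTwoAt (supConv Ω u ε) P X x ∧ HasTaylorTwoAt (supConv Ω w ε) Q Z x ∧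
      ∀ k, ⟪(X + Z) k, k⟫ ≤ 0 := by
  obtain ⟨R, hR⟩ := hΩ.closure.exists_norm_le
  obtain ⟨Mu, hMu⟩ := hΩ.isCompact_closure.bddAbove_image hu
  obtain ⟨Mw, hMw⟩ := hΩ.isCompact_closure.bddAbove_image hw
  rw [mem_upperBounds, forall_mem_image] at hMu hMw
  refine (isSemiconvex_supConv hΩ hne hu ε).exists_isMaxOn_hasTaylorTwoAt
    (isSemiconvex_supConv hΩ hne hw ε) (a := 1 / (2 * ε)) (C := Mu + Mw + R ^ 2 / ε)
    (by positivity) (by positivity) (fun y => ?_) hδ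
  have hle := add_le_add (supConv_le_sub_mul_norm_sq hε @hMu hR hne y)
    (supConv_le_sub_mul_norm_sq hε @hMw hR hne y)
  convert! hle using 1
  field_simp
  ring

/-- The points `ξ`, `η` may lie on the boundary here, where the expansions of the sup-convolutions
say nothing about `u` and `w`. -/
lemma exists_near_max_imp_hasSuperjetAt (hΩo : IsOpen Ω) (hΩ : Bornology.IsBounded Ω)
    (hu : ContinuousOn u (closure Ω)) (hw : ContinuousOn w (closure Ω)) {x₀ : Eucl d}
    (hx₀ : x₀ ∈ closure Ω) {e r : ℝ} (he : 0 < e) (hle : e ≤ u x₀ + w x₀) (hr : 0 < r) :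
    ∃ ξ ∈ closure Ω, ∃ η ∈ closure Ω, ∃ P Q X Z, ‖ξ - η‖ < r ∧ u x₀ + w x₀ - e ≤ u ξ + w η ∧
      ‖P + Q‖ < e ∧ (ξ ∈ Ω → HasSuperjetAt u P X ξ) ∧ (η ∈ Ω → HasSuperjetAt w Q Z η) ∧
      ∀ k, ⟪(X + Z) k, k⟫ ≤ 0 := by
  have hne : Ω.Nonempty := closure_nonempty_iff.1 ⟨x₀, hx₀⟩
  obtain ⟨R, hR⟩ := hΩ.closure.exists_norm_le
  have hR0 : 0 ≤ R := (norm_nonneg _).trans (hR x₀ hx₀)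
  obtain ⟨Mu, hMu⟩ := hΩ.isCompact_closure.bddAbove_image hu
  obtain ⟨Mw, hMw⟩ := hΩ.isCompact_closure.bddAbove_image hw
  rw [mem_upperBounds, forall_mem_image] at hMu hMw
  obtain ⟨δ, hδ, hδ1, hδe, hδR⟩ : ∃ δ > 0, δ ≤ 1 ∧ δ ≤ e ∧ δ * (2 * R + 1) ≤ e :=
    ⟨min 1 (min e (e / (2 * R + 1))), by positivity, min_le_left _ _,
      (min_le_right _ _).trans (min_le_left _ _), (le_div_iff₀ (by positivity)).1
        ((min_le_right _ _).trans (min_le_right _ _))⟩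
  obtain ⟨ν, hν, hνr⟩ : ∃ ν ∈ Ioc (0 : ℝ) (1 / 4), (Mu + Mw) * (8 * ν) < r ^ 2 :=
    (Eventually.and (Ioc_mem_nhdsGT (by norm_num)) <| nhdsWithin_le_nhds <|
      (Continuous.tendsto' (by fun_prop) 0 _ (by simp)).eventually_lt_const (pow_pos hr 2)).exists
  obtain ⟨x, P, Q, X, Z, hPQ, hmax, hX, hZ, hXZ⟩ :=
    exists_isMaxOn_supConv_hasTaylorTwoAt hΩ hne hu hw hν.1 hδ
  obtain ⟨ξ, hξ, huξ⟩ := exists_supConv_eq hΩ hne hu ν x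
  obtain ⟨η, hη, hwη⟩ := exists_supConv_eq hΩ hne hw ν x
  have hkey := add_norm_sq_div_le_of_isMaxOn_supConv hΩ hu hw hR hν (hPQ.le.trans hδ1) hmax hξ
    huξ hwη hx₀
  have hPQe : ‖P + Q‖ * (2 * R + 1) ≤ e := le_trans (by gcongr) hδR
  have hν0 := hν.1
  refine ⟨ξ, hξ, η, hη, P, Q, X, Z, lt_of_pow_lt_pow_left₀ 2 hr.le (hνr.trans_le' ?_), ?_,
    hPQ.trans_le hδe, fun h => hX.hasSuperjetAt_of_supConv hΩo hΩ hu h huξ,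
    fun h => hZ.hasSuperjetAt_of_supConv hΩo hΩ hw h hwη, hXZ⟩
  · rw [← div_le_iff₀ (by positivity)]
    linarith [hMu hξ, hMw hη]
  · have : 0 ≤ ‖ξ - η‖ ^ 2 / (8 * ν) := by positivity
    linarith

lemma exists_near_max_hasSuperjetAt (hΩo : IsOpen Ω) (hΩ : Bornology.IsBounded Ω)
    (hu : ContinuousOn u (closure Ω)) (hw : ContinuousOn w (closure Ω))
    (hfr : ∀ y ∈ frontier Ω, u y + w y ≤ 0) {x₀ : Eucl d} (hx₀ : x₀ ∈ closure Ω)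
    (hpos : 0 < u x₀ + w x₀) {ε : ℝ} (hε : 0 < ε) :
    ∃ ξ ∈ Ω, ∃ η ∈ Ω, ∃ P Q X Z, ‖ξ - η‖ < ε ∧ u x₀ + w x₀ - ε ≤ u ξ + w η ∧ ‖P + Q‖ < ε ∧
      HasSuperjetAt u P X ξ ∧ HasSuperjetAt w Q Z η ∧ ∀ k, ⟪(X + Z) k, k⟫ ≤ 0 := by
  obtain ⟨e, he, heε, heκ⟩ : ∃ e > 0, e ≤ ε ∧ 2 * e ≤ u x₀ + w x₀ :=
    ⟨min ε ((u x₀ + w x₀) / 2), by positivity, min_le_left _ _,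
      (le_div_iff₀' two_pos).1 (min_le_right _ _)⟩
  obtain ⟨s, hs, hinterior⟩ := exists_forall_norm_sub_lt_mem_of_le_add hΩo hΩ hu hw hfr he
  obtain ⟨ξ, hξ, η, hη, P, Q, X, Z, hlt, hval, hPQ, hX, hZ, hXZ⟩ :=
    exists_near_max_imp_hasSuperjetAt hΩo hΩ hu hw hx₀ he (by linarith) (lt_min hs hε)
  rw [lt_min_iff] at hlt
  obtain ⟨hξΩ, hηΩ⟩ := hinterior ξ hξ η hη hlt.1 (by linarith)
  exact ⟨ξ, hξΩ, η, hηΩ, P, Q, X, Z, hlt.2, by linarith, hPQ.trans_le heε, hX hξΩ, hZ hηΩ, hXZ⟩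

end Sums

/-! ### The comparison principle -/

section Structure

variable {d : ℕ} {lam Lam gam : ℝ} {N : Matrix (Fin d) (Fin d) ℝ}

lemma eigs_nonneg_of_posSemidef (hN : N.PosSemidef) (i : Fin d) : 0 ≤ eigs N i := by
  rw [eigs, dif_pos hN.isHermitian]
  exact hN.eigenvalues_nonneg i

lemma sum_eigs_eq_trace (hN : N.IsHermitian) : ∑ i, eigs N i = N.trace := by
  simp only [eigs, dif_pos hN, hN.trace_eq_sum_eigenvalues, RCLike.ofReal_real_eq_id, id_eq]

lemma pucciPlus_of_posSemidef (hN : N.PosSemidef) (lam Lam : ℝ) :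
    pucciPlus lam Lam N = -lam * N.trace := by
  simp [pucciPlus, posPartTrace, negPartTrace, eigs_nonneg_of_posSemidef hN,
    sum_eigs_eq_trace hN.isHermitian]

lemma pucciMinus_of_posSemidef (hN : N.PosSemidef) (lam Lam : ℝ) :
    pucciMinus lam Lam N = -Lam * N.trace := by
  simp [pucciMinus, posPartTrace, negPartTrace, eigs_nonneg_of_posSemidef hN,
    sum_eigs_eq_trace hN.isHermitian]

/-- The monotonicity comes from the sign of `pucciPlus` on positive semidefinite matrices. -/
lemma StructureCondition.le_of_posSemidef {ω : ℝ → ℝ → ℝ} {S : Set (Eucl d)} {I : Set ℝ}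
    {F : Matrix (Fin d) (Fin d) ℝ → Eucl d → ℝ → Eucl d → ℝ → ℝ}
    (hF : StructureCondition lam Lam gam ω S I F) (hlam : 0 ≤ lam)
    {M : Matrix (Fin d) (Fin d) ℝ} (hM : M.IsSymm) (hN : N.IsSymm) {τ : ℝ} (hτ : 0 ≤ τ)
    (hMN : (N + τ • 1 - M).PosSemidef) (P Q : Eucl d) {r s : ℝ} (hsr : s ≤ r) {x : Eucl d}
    (hx : x ∈ S) {t : ℝ} (ht : t ∈ I) :
    F N Q s x t ≤ F M P r x t + Lam * (d * τ) + gam * ‖P - Q‖ := by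
  obtain ⟨hω, hF⟩ := hF
  have hR : 0 < max |r| |s| + 1 := by positivity
  have hr : |r| ≤ max |r| |s| + 1 := by linarith [le_max_left |r| |s|]
  have hs : |s| ≤ max |r| |s| + 1 := by linarith [le_max_right |r| |s|]
  have hτ1 : (τ • 1 : Matrix (Fin d) (Fin d) ℝ).PosSemidef := Matrix.PosSemidef.one.smul hτ
  have hNτ : (N + τ • 1).IsSymm := hN.add (Matrix.isSymm_one.smul τ)
  have hupper := (hF _ hR (N + τ • 1) M hNτ hM Q P s r hs hr x hx t ht).2
  have hlower := (hF _ hR (N + τ • 1) N hNτ hN Q Q s s hs hs x hx t ht).1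
  rw [pucciPlus_of_posSemidef hMN, max_eq_right (sub_nonpos.2 hsr), (hω _ hR).2.2,
    norm_sub_rev] at hupper
  rw [add_sub_cancel_left, pucciMinus_of_posSemidef hτ1, sub_self, norm_zero, sub_self, max_self,
    (hω _ hR).2.2, Matrix.trace_smul, Matrix.trace_one, Fintype.card_fin, smul_eq_mul] at hlower
  linarith [mul_nonneg hlam hMN.trace_nonneg]

end Structure

section Comparison

variable {d : ℕ} {Ω : Set (Eucl d)} {C γ K h A : ℝ} {σ : ℝ → ℝ}
  {G₁ G₂ : Matrix (Fin d) (Fin d) ℝ → Eucl d → ℝ → Eucl d → ℝ} {a b u v : Eucl d → ℝ}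

/-- The structural inequality between two operators behind the comparison of a subsolution for
`G₁` with a supersolution for `G₂`. The matrices need to be ordered only up to `τ`, and `K` bounds
the difference of the operators at identical arguments. -/
def ComparisonStructure (S : Set (Eucl d)) (C γ : ℝ) (σ : ℝ → ℝ) (K : ℝ)
    (G₁ G₂ : Matrix (Fin d) (Fin d) ℝ → Eucl d → ℝ → Eucl d → ℝ) : Prop :=
  ∀ X Y : Matrix (Fin d) (Fin d) ℝ, X.IsSymm → Y.IsSymm → ∀ τ, 0 ≤ τ →
    (Y + τ • 1 - X).PosSemidef → ∀ (P Q : Eucl d) (r s : ℝ), s ≤ r → ∀ ξ ∈ S, ∀ η ∈ S,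
      G₂ Y Q s η ≤ G₁ X P r ξ + C * τ + γ * ‖P - Q‖ + σ ‖ξ - η‖ + K

lemma posSemidef_neg_add_of_inner_nonpos {X Z : Matrix (Fin d) (Fin d) ℝ}
    (hX : X.IsSymm) (hZ : Z.IsSymm)
    (hXZ : ∀ k, ⟪(Matrix.toEuclideanCLM (𝕜 := ℝ) X + Matrix.toEuclideanCLM (𝕜 := ℝ) Z) k, k⟫ ≤ 0) :
    (-(X + Z)).PosSemidef := by
  rw [← Matrix.isPositive_toEuclideanLin_iff]
  refine ⟨Matrix.isSymmetric_toEuclideanLin_iff.2 (Matrix.isHermitian_iff_isSymm.2 (hX.add hZ).neg),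
    fun k => ?_⟩
  have hk := neg_nonneg.2 (hXZ k)
  rwa [← map_add, ← inner_neg_left, ← neg_apply, ← map_neg] at hk

lemma ComparisonStructure.le_of_hasSuperjetAt (hG : ComparisonStructure (closure Ω) C γ σ K G₁ G₂)
    (hu : ViscSubsol Ω (fun M P r x => G₁ M P r x + r / h) (fun x => a x / h) u)
    (hv : ViscSupersol Ω (fun M P r x => G₂ M P r x + r / h) (fun x => b x / h) v)
    {ξ η P Q : Eucl d} {X Z : Eucl d →L[ℝ] Eucl d} (hξ : ξ ∈ Ω) (hη : η ∈ Ω)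
    (hle : v η ≤ u ξ) (hX : HasSuperjetAt u P X ξ) (hZ : HasSuperjetAt (fun x => -v x) Q Z η)
    (hXZ : ∀ k, ⟪(X + Z) k, k⟫ ≤ 0) {τ : ℝ} (hτ : 0 < τ) :
    (u ξ - v η) / h ≤ (a ξ - b η) / h + C * (2 * τ) + γ * ‖P + Q‖ + σ ‖ξ - η‖ + K := by
  obtain ⟨X, rfl⟩ := (Matrix.toEuclideanCLM (n := Fin d) (𝕜 := ℝ)).surjective X
  obtain ⟨Z, rfl⟩ := (Matrix.toEuclideanCLM (n := Fin d) (𝕜 := ℝ)).surjective Z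
  have hXsymm : X.IsSymm :=
    Matrix.isHermitian_iff_isSymm.1 (Matrix.isSymmetric_toEuclideanLin_iff.1 hX.isSymmetric)
  have hZsymm : Z.IsSymm :=
    Matrix.isHermitian_iff_isSymm.1 (Matrix.isSymmetric_toEuclideanLin_iff.1 hZ.isSymmetric)
  have hsub := hu.le_of_hasSuperjetAt hξ hX hτ
  have hsup := hv.neg.le_of_hasSuperjetAt hη hZ hτ
  have hshift {M : Matrix (Fin d) (Fin d) ℝ} (hM : M.IsSymm) : (M + τ • 1).IsSymm :=
    hM.add (Matrix.isSymm_one.smul τ)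
  have hord : (-(Z + τ • 1) + (2 * τ) • 1 - (X + τ • 1)).PosSemidef := by
    convert! posSemidef_neg_add_of_inner_nonpos hXsymm hZsymm hXZ using 1
    module
  have hstruct := hG (X + τ • 1) (-(Z + τ • 1)) (hshift hXsymm) (hshift hZsymm).neg (2 * τ)
    (by positivity) hord P (-Q) (u ξ) (v η) hle ξ (subset_closure hξ) η (subset_closure hη)
  rw [neg_neg] at hsup
  rw [sub_neg_eq_add] at hstruct
  simp only [sub_div]
  linarith

lemma ComparisonStructure.exists_sub_le (hG : ComparisonStructure (closure Ω) C γ σ K G₁ G₂)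
    (hγ : 0 ≤ γ) (hσ : Monotone σ) (hΩo : IsOpen Ω) (hΩ : Bornology.IsBounded Ω) (hh : 0 < h)
    (hu : ContinuousOn u (closure Ω)) (hv : ContinuousOn v (closure Ω))
    (hfr : ∀ x ∈ frontier Ω, u x ≤ v x)
    (hsub : ViscSubsol Ω (fun M P r x => G₁ M P r x + r / h) (fun x => a x / h) u)
    (hsup : ViscSupersol Ω (fun M P r x => G₂ M P r x + r / h) (fun x => b x / h) v)
    {x₀ : Eucl d} (hx₀ : x₀ ∈ closure Ω) {ε : ℝ} (hε : 0 < ε) (hlt : ε < u x₀ - v x₀) :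
    ∃ ξ ∈ Ω, ∃ η ∈ Ω, ‖ξ - η‖ < ε ∧
      u x₀ - v x₀ - ε ≤ a ξ - b η + h * (C * (2 * ε) + γ * ε + σ ε + K) := by
  obtain ⟨ξ, hξ, η, hη, P, Q, X, Z, hclose, hval, hPQ, hX, hZ, hXZ⟩ :=
    exists_near_max_hasSuperjetAt hΩo hΩ hu (w := fun y => -v y) hv.neg
      (fun y hy => by linarith [hfr y hy]) hx₀ (by linarith) hε
  have hjet := hG.le_of_hasSuperjetAt hsub hsup hξ hη (by linarith) hX hZ hXZ hε
  have hγPQ : γ * ‖P + Q‖ ≤ γ * ε := by gcongr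
  have hσξη : σ ‖ξ - η‖ ≤ σ ε := hσ hclose.le
  have hgap : (u ξ - v η - (a ξ - b η)) / h ≤ C * (2 * ε) + γ * ε + σ ε + K := by
    rw [sub_div]
    linarith
  rw [div_le_iff₀' hh] at hgap
  exact ⟨ξ, hξ, η, hη, hclose, by linarith⟩

lemma ComparisonStructure.sub_le (hG : ComparisonStructure (closure Ω) C γ σ K G₁ G₂)
    (hγ : 0 ≤ γ) (hσ : IsModulus σ) (hΩo : IsOpen Ω) (hΩ : Bornology.IsBounded Ω) (hh : 0 < h)
    (hu : ContinuousOn u (closure Ω)) (hv : ContinuousOn v (closure Ω))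
    (hb : ContinuousOn b (closure Ω)) (hfr : ∀ x ∈ frontier Ω, u x ≤ v x)
    (hsub : ViscSubsol Ω (fun M P r x => G₁ M P r x + r / h) (fun x => a x / h) u)
    (hsup : ViscSupersol Ω (fun M P r x => G₂ M P r x + r / h) (fun x => b x / h) v)
    (hab : ∀ x ∈ closure Ω, a x - b x ≤ A) (hA : 0 ≤ A + h * K) {x₀ : Eucl d}
    (hx₀ : x₀ ∈ closure Ω) : u x₀ - v x₀ ≤ A + h * K := by
  rcases le_or_gt (u x₀ - v x₀) 0 with hneg | hpos
  · exact hneg.trans hA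
  refine le_of_forall_pos_le_add fun ρ hρ => ?_
  obtain ⟨s, hs, hbs⟩ := Metric.uniformContinuousOn_iff.1
    (hΩ.isCompact_closure.uniformContinuousOn_of_continuous hb) ρ hρ
  have hlim : Tendsto (fun ε => A + ρ + h * (C * (2 * ε) + γ * ε + σ ε + K) + ε) (𝓝[>] 0)
      (𝓝 (A + h * K + ρ)) := by
    have := hσ.2.1
    refine (Continuous.tendsto' (by fun_prop) _ _ ?_).mono_left nhdsWithin_le_nhds
    rw [hσ.2.2]
    ring
  refine ge_of_tendsto hlim ?_
  filter_upwards [Ioo_mem_nhdsGT (lt_min hs hpos)] with ε ⟨hε, hεs⟩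
  rw [lt_min_iff] at hεs
  obtain ⟨ξ, hξ, η, hη, hclose, hle⟩ :=
    hG.exists_sub_le hγ hσ.1 hΩo hΩ hh hu hv hfr hsub hsup hx₀ hε hεs.2
  have hbξη := hbs ξ (subset_closure hξ) η (subset_closure hη)
    (by rw [dist_eq_norm]; exact hclose.trans hεs.1)
  linarith [(abs_lt.1 hbξη).2, hab ξ (subset_closure hξ)]

end Comparison

/-! ### Implicit time steps -/

section Rothe

lemma abs_le_supNorm {d : ℕ} {Ω : Set (Eucl d)} (hΩ : Bornology.IsBounded Ω) {w : Eucl d → ℝ}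
    (hw : ContinuousOn w (closure Ω)) {x : Eucl d} (hx : x ∈ closure Ω) : |w x| ≤ supNorm Ω w :=
  le_csSup (hΩ.isCompact_closure.bddAbove_image hw.abs) (mem_image_of_mem _ hx)

lemma supNorm_nonneg {d : ℕ} (Ω : Set (Eucl d)) (w : Eucl d → ℝ) : 0 ≤ supNorm Ω w :=
  Real.sSup_nonneg (forall_mem_image.2 fun _ _ => abs_nonneg _)

lemma IsModulus.nonneg {σ : ℝ → ℝ} (hσ : IsModulus σ) {t : ℝ} (ht : 0 ≤ t) : 0 ≤ σ t :=
  hσ.2.2 ▸ hσ.1 ht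

variable {d : ℕ} {lam Lam gam : ℝ} {Ω : Set (Eucl d)} {ω : ℝ → ℝ → ℝ} {σ₁ σ₂ : ℝ → ℝ}
  {F : Matrix (Fin d) (Fin d) ℝ → Eucl d → ℝ → Eucl d → ℝ → ℝ}

lemma StructureCondition.comparisonStructure {S : Set (Eucl d)} {I : Set ℝ}
    (hF : StructureCondition lam Lam gam ω S I F) (hlam : 0 ≤ lam)
    (hjoint : ∀ M P r, ∀ x ∈ S, ∀ y ∈ S, ∀ t ∈ I, ∀ s ∈ I,
      |F M P r x t - F M P r y s| ≤ σ₁ ‖x - y‖ + σ₂ |t - s|)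
    {t₁ t₂ : ℝ} (ht₁ : t₁ ∈ I) (ht₂ : t₂ ∈ I) :
    ComparisonStructure S (Lam * d) gam σ₁ (σ₂ |t₁ - t₂|)
      (fun M P r x => F M P r x t₁) (fun M P r x => F M P r x t₂) := by
  intro X Y hX hY τ hτ hXY P Q r s hsr ξ hξ η hη
  have hstruct := hF.le_of_posSemidef hlam hX hY hτ hXY P Q hsr hη ht₂
  have hmod := (abs_le.1 (hjoint X P r ξ hξ η hη t₁ ht₁ t₂ ht₂)).1
  linarith

variable {h : ℝ} {m m' : ℕ} {a b u v : Eucl d → ℝ}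

lemma RotheStep.sub_le (hu : RotheStep Ω F h m a u) (hv : RotheStep Ω F h m' b v)
    (hF : StructureCondition lam Lam gam ω (closure Ω) (Ici 0) F) (hlam : 0 ≤ lam)
    (hgam : 0 ≤ gam) (hσ₁ : IsModulus σ₁) (hσ₂ : IsModulus σ₂)
    (hjoint : ∀ M P r, ∀ x ∈ closure Ω, ∀ y ∈ closure Ω, ∀ t ∈ Ici (0 : ℝ), ∀ s ∈ Ici (0 : ℝ),
      |F M P r x t - F M P r y s| ≤ σ₁ ‖x - y‖ + σ₂ |t - s|)
    (hΩo : IsOpen Ω) (hΩ : Bornology.IsBounded Ω) (hh : 0 < h) (ha : ContinuousOn a (closure Ω))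
    (hb : ContinuousOn b (closure Ω)) {x : Eucl d} (hx : x ∈ closure Ω) :
    u x - v x ≤ supNorm Ω (fun y => a y - b y) + h * σ₂ |(m + 1) * h - (m' + 1) * h| := by
  have hcomp := hF.comparisonStructure hlam hjoint (t₁ := (m + 1) * h) (t₂ := (m' + 1) * h)
    (mem_Ici.2 (by positivity)) (mem_Ici.2 (by positivity))
  have hfr (y) (hy : y ∈ frontier Ω) : u y ≤ v y := by rw [hu.2.2 y hy, hv.2.2 y hy]
  exact hcomp.sub_le hgam hσ₁ hΩo hΩ hh hu.1 hv.1 hb hfr hu.2.1.1 hv.2.1.2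
    (fun y hy => (le_abs_self _).trans (abs_le_supNorm hΩ (ha.sub hb) hy))
    (add_nonneg (supNorm_nonneg _ _) (mul_nonneg hh.le (hσ₂.nonneg (abs_nonneg _)))) hx

lemma supNorm_sub_comm (Ω : Set (Eucl d)) (u v : Eucl d → ℝ) :
    supNorm Ω (fun x => u x - v x) = supNorm Ω (fun x => v x - u x) := by
  simp only [supNorm, abs_sub_comm]

lemma RotheStep.supNorm_sub_le (hu : RotheStep Ω F h m a u) (hv : RotheStep Ω F h m' b v)
    (hF : StructureCondition lam Lam gam ω (closure Ω) (Ici 0) F) (hlam : 0 ≤ lam)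
    (hgam : 0 ≤ gam) (hσ₁ : IsModulus σ₁) (hσ₂ : IsModulus σ₂)
    (hjoint : ∀ M P r, ∀ x ∈ closure Ω, ∀ y ∈ closure Ω, ∀ t ∈ Ici (0 : ℝ), ∀ s ∈ Ici (0 : ℝ),
      |F M P r x t - F M P r y s| ≤ σ₁ ‖x - y‖ + σ₂ |t - s|)
    (hΩo : IsOpen Ω) (hΩ : Bornology.IsBounded Ω) (hh : 0 < h) (ha : ContinuousOn a (closure Ω))
    (hb : ContinuousOn b (closure Ω)) :
    supNorm Ω (fun x => u x - v x)
      ≤ supNorm Ω (fun x => a x - b x) + h * σ₂ |(m + 1) * h - (m' + 1) * h| := by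
  have hnonneg : 0 ≤ h * σ₂ |(m + 1) * h - (m' + 1) * h| :=
    mul_nonneg hh.le (hσ₂.nonneg (abs_nonneg _))
  refine Real.sSup_le (forall_mem_image.2 fun x hx => abs_sub_le_iff.2 ⟨?_, ?_⟩)
    (add_nonneg (supNorm_nonneg _ _) hnonneg)
  · exact hu.sub_le hv hF hlam hgam hσ₁ hσ₂ hjoint hΩo hΩ hh ha hb hx
  · rw [supNorm_sub_comm, abs_sub_comm]
    exact hv.sub_le hu hF hlam hgam hσ₁ hσ₂ hjoint hΩo hΩ hh hb ha hx

end Rothe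

theorem inductive_estimation_general {d : ℕ} {lam Lam gam : ℝ} (hlam : 0 ≤ lam) (hgam : 0 ≤ gam)
    {Ω : Set (Eucl d)} (hΩopen : IsOpen Ω) (hΩbdd : Bornology.IsBounded Ω)
    {F : Matrix (Fin d) (Fin d) ℝ → Eucl d → ℝ → Eucl d → ℝ → ℝ} {ω : ℝ → ℝ → ℝ} {σ₁ σ₂ : ℝ → ℝ}
    (hStruct : StructureCondition lam Lam gam ω (closure Ω) (Ici 0) F)
    (hσ₁ : IsModulus σ₁) (hσ₂ : IsModulus σ₂)
    (hjoint : ∀ M P r, ∀ x ∈ closure Ω, ∀ y ∈ closure Ω, ∀ t ∈ Ici (0 : ℝ), ∀ s ∈ Ici (0 : ℝ),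
      |F M P r x t - F M P r y s| ≤ σ₁ ‖x - y‖ + σ₂ |t - s|)
    {h : ℝ} (hh : 0 < h) {z : ℕ → Eucl d → ℝ} (hz0 : ContinuousOn (z 0) (closure Ω))
    (hstep : ∀ m : ℕ, RotheStep Ω F h m (z m) (z (m + 1))) (m : ℕ) (hm : 1 ≤ m) :
    supNorm Ω (fun x => z (m + 1) x - z m x) ≤
      supNorm Ω (fun x => z m x - z (m - 1) x) + h * σ₂ h := by
  obtain ⟨k, rfl⟩ := Nat.exists_eq_add_of_le' hm
  have hcont : ∀ j, ContinuousOn (z j) (closure Ω)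
    | 0 => hz0
    | j + 1 => (hstep j).1
  have htime : |((k + 1 : ℕ) + 1) * h - (k + 1) * h| = h := by
    rw [← sub_mul, Nat.cast_succ, add_sub_cancel_left, one_mul, abs_of_pos hh]
  simpa only [htime, Nat.add_sub_cancel] using
    (hstep (k + 1)).supNorm_sub_le (hstep k) hStruct hlam hgam hσ₁ hσ₂ hjoint hΩopen hΩbdd hh
      (hcont (k + 1)) (hcont k)

/-- **Inductive Estimation.**  If `F` satisfies the structure condition, is uniformly
elliptic and has joint modulus of continuity `σ₁, σ₂` in `(x,t)`, then the Rothe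
approximations satisfy `‖z_{n+1,h} - z_{n,h}‖_∞ ≤ ‖z_{n,h} - z_{n-1,h}‖_∞ + h σ₂(h)` for
every `n ≥ 1`. -/
theorem inductive_estimation (d : ℕ) (lam Lam gam : ℝ)
    (hlam : 0 < lam) (hlL : lam ≤ Lam) (hgam : 0 ≤ gam)
    (Ω : Set (Eucl d)) (hΩopen : IsOpen Ω) (hΩbdd : Bornology.IsBounded Ω)
    (F : Matrix (Fin d) (Fin d) ℝ → Eucl d → ℝ → Eucl d → ℝ → ℝ)
    (ω : ℝ → ℝ → ℝ) (σ₁ σ₂ : ℝ → ℝ)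
    (hFcont : ContinuousOn
      (fun q : Matrix (Fin d) (Fin d) ℝ × Eucl d × ℝ × Eucl d × ℝ =>
        F q.1 q.2.1 q.2.2.1 q.2.2.2.1 q.2.2.2.2)
      (univ ×ˢ univ ×ˢ univ ×ˢ closure Ω ×ˢ Ici 0))
    (hUE : UniformlyElliptic lam Lam (closure Ω) (Ici 0) F)
    (hStruct : StructureCondition lam Lam gam ω (closure Ω) (Ici 0) F)
    (hσ₁ : IsModulus σ₁) (hσ₂ : IsModulus σ₂)
    (hjoint : ∀ (M : Matrix (Fin d) (Fin d) ℝ) (P : Eucl d) (r : ℝ),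
      ∀ x ∈ closure Ω, ∀ y ∈ closure Ω, ∀ t ∈ Ici (0:ℝ), ∀ s ∈ Ici (0:ℝ),
        |F M P r x t - F M P r y s| ≤ σ₁ ‖x - y‖ + σ₂ |t - s|)
    (h : ℝ) (hh : h ∈ Ioc (0:ℝ) 1)
    (z : ℕ → Eucl d → ℝ) (hz0 : ∀ x, z 0 x = 0)
    (hstep : ∀ m : ℕ, RotheStep Ω F h m (z m) (z (m + 1))) :
    ∀ m : ℕ, 1 ≤ m →
      supNorm Ω (fun x => z (m + 1) x - z m x) ≤
        supNorm Ω (fun x => z m x - z (m - 1) x) + h * σ₂ h :=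
  inductive_estimation_general hlam.le hgam hΩopen hΩbdd hStruct hσ₁ hσ₂ hjoint hh.1
    (continuousOn_const.congr fun x _ => hz0 x) hstep

end
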